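/- For every δ > 0 there exist a real y = y(δ) > 0 and x₀ such that for all x ≥ x₀: the number of primes p ≤ x that are y-rough and satisfy j(d) ≤ 2·(d/φ(d))·ω(d) for every divisor d of p−1 with d > 1 is at least (1−δ) times the number of y-rough primes p ≤ x. -/

import Mathlib

/-!
Let `S(p) = ∑ 1 / q`, the sum running over the odd prime factors `q` of `p - 1`. If `S(p) < 1 / 2`
then the same holds for every divisor `d > 1` of `p - 1`, and a plain union bound already gives
the Jacobsthal estimate (`jacobsthal_bound`): each odd prime `q ∣ d` removes at most `M / q + 1`
elements from an interval of length `M`, so `M = 2 ω(d)` integers suffice when `d` is odd, and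
`2 ω(d)` consecutive odd integers suffice when `d` is even, where `d / φ(d) ≥ 2`. It remains to
show that the `y`-rough primes `p ≤ x` with `S(p) ≥ 1 / 2` have relative density tending to `0` as
`y` grows. No sieve asymptotics are needed: an upper bound for the exceptions and a lower bound
for the rough primes, with any gap between the exponents of `y`, are enough.

*Exceptions.* By Markov's inequality their number is at most `2 ∑ π(x; q, 1) / q` over the odd
primes `q ≥ y`. A Chebyshev-type argument gives `π(x; q, 1) ≪ (x / q) log q / log x` for `q ^ 4 ≤ x`
(`eventually_card_prime_modEq_le`): with `N = ⌊x / q⌋`, the factorial `N !` divides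
`q ^ N ∏ (q m + 1)`, `1 ≤ m ≤ N`, and every prime `p ≡ 1 (mod q)` in `(N, x]` divides the quotient,
which is at most `q ^ (3 N)`. For larger `q` the trivial bound `x / q` is used. This yields
`O(y ^ (-7/10) x / log x)` exceptions (`exists_bad_count_bound`).

*Rough primes.* A prime `p` is `y`-rough if `p - 1` is invertible modulo the product `M` of the odd
primes below `y`. Restrict the von Mangoldt function to the classes `a` modulo `M` such that
`a` and `a - 1` are units, a proportion `A = ∏ (q - 2) / (q - 1)` of the reduced classes. Its
Dirichlet series minus `A ζ(s)` is continuous on `re s ≥ 1`, by the non-vanishing of Dirichlet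
`L`-functions, and a Tauberian argument with the Fejér kernel (`tauberian_lower_bound`) gives at
least `c A ^ 2 x / log x` such primes with `c` absolute. Since the primes above `3` lie in two classes
modulo `6`, `A ≫ y ^ (-1/3)` (`prod_localFactor_lower`), so there are at least
`≫ y ^ (-2/3) x / log x` rough primes. As `7/10 > 2/3`, taking `y` large finishes the proof.
-/

/-- A prime `p` is `y`-rough if every prime factor of `p - 1` other than `2`
is at least `y`. -/
def IsRough (y : ℝ) (p : ℕ) : Prop :=
  ∀ q : ℕ, q.Prime → q ∣ p - 1 → q ≠ 2 → y ≤ (q : ℝ)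

/-- The Jacobsthal function: the least positive `m` such that among any `m`
consecutive integers there is one coprime to `n`. -/
noncomputable def jacobsthal (n : ℕ) : ℕ :=
  sInf {m : ℕ | 0 < m ∧ ∀ b : ℤ, ∃ k : ℤ, b < k ∧ k ≤ b + m ∧ IsCoprime k (n : ℤ)}

/-! ### A sieve bound for the Jacobsthal function -/

/-- The sum of the reciprocals of the odd prime factors of `n`. -/
noncomputable def oddRecipSum (n : ℕ) : ℝ :=
  ∑ q ∈ n.primeFactors.filter (· ≠ 2), (1 : ℝ) / q

/-- Union bound for a one-dimensional sieve: if each `q ∈ P` removes one residue class from an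
interval of `M` integers and the trivial bounds `M / q + 1` sum to less than `M`, some integer
survives. -/
lemma exists_avoiding (P : Finset ℕ) (hP : ∀ q ∈ P, 0 < q) (r : ℕ → ℤ) (c : ℤ) (M : ℕ)
    (h : ∑ q ∈ P, ((M : ℝ) / q + 1) < M) :
    ∃ j : ℤ, c < j ∧ j ≤ c + M ∧ ∀ q ∈ P, ¬ j ≡ r q [ZMOD (q : ℤ)] := by
  by_contra! hcon
  have hsub : Finset.Ioc c (c + M) ⊆
      P.biUnion fun q ↦ (Finset.Ioc c (c + M)).filter (fun j ↦ j ≡ r q [ZMOD (q : ℤ)]) := by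
    intro j hj
    obtain ⟨h1, h2⟩ := Finset.mem_Ioc.mp hj
    obtain ⟨q, hq, hqj⟩ := hcon j h1 h2
    exact Finset.mem_biUnion.mpr ⟨q, hq, Finset.mem_filter.mpr ⟨hj, hqj⟩⟩
  have hcard := (Finset.card_le_card hsub).trans Finset.card_biUnion_le
  rw [Int.card_Ioc, add_sub_cancel_left, Int.toNat_natCast] at hcard
  have hb : ∀ q ∈ P,
      (((Finset.Ioc c (c + M)).filter (fun j ↦ j ≡ r q [ZMOD (q : ℤ)])).card : ℝ) ≤
        (M : ℝ) / q + 1 := by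
    intro q hq
    have hq0 : (0 : ℤ) < q := by exact_mod_cast hP q hq
    have key := Int.Ioc_filter_modEq_card c (c + M) hq0 (r q)
    have hq0' : (0 : ℚ) < q := by exact_mod_cast hP q hq
    have hQ : (((Finset.Ioc c (c + M)).filter (fun j ↦ j ≡ r q [ZMOD (q : ℤ)])).card : ℚ) ≤
        (M : ℚ) / q + 1 := by
      have key' := congrArg (Int.cast : ℤ → ℚ) key
      rw [Int.cast_natCast] at key'
      rw [key']
      push_cast
      refine max_le ?_ (by positivity)
      have h1 := Int.floor_le ((((c + M : ℤ) : ℚ) - (r q : ℚ)) / ((q : ℤ) : ℚ))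
      have h2 := Int.lt_floor_add_one (((c : ℚ) - (r q : ℚ)) / ((q : ℤ) : ℚ))
      push_cast at h1 h2
      have h3 : ((c : ℚ) + M - r q) / q = (c - r q) / q + M / q := by ring
      linarith
    have hR := (Rat.cast_le (K := ℝ)).mpr hQ
    push_cast at hR
    exact hR
  have : (M : ℝ) ≤ ∑ q ∈ P, ((M : ℝ) / q + 1) := by
    calc (M : ℝ) ≤ ((∑ q ∈ P,
          ((Finset.Ioc c (c + M)).filter (fun j ↦ j ≡ r q [ZMOD (q : ℤ)])).card : ℕ) : ℝ) := by
          exact_mod_cast hcard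
      _ ≤ _ := by push_cast; exact Finset.sum_le_sum hb
  linarith

lemma isCoprime_of_forall_prime {k : ℤ} {d : ℕ} (hd : d ≠ 0)
    (h : ∀ q ∈ d.primeFactors, ¬ (q : ℤ) ∣ k) : IsCoprime k (d : ℤ) := by
  rw [Int.isCoprime_iff_nat_coprime, Int.natAbs_natCast]
  refine Nat.coprime_of_dvd fun q hq hqk hqd ↦ ?_
  exact h q (Nat.mem_primeFactors.mpr ⟨hq, hqd, hd⟩) (Int.natCast_dvd.mpr hqk)

/-- The Jacobsthal bound holds as soon as the odd prime factors of `d` have reciprocal sum less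
than `1 / 2`: an odd `d` is sieved over an interval of length `2 ω(d)`, and an even one over the
odd integers of an interval of length `4 ω(d)`, using `d / φ(d) ≥ 2`. -/
lemma jacobsthal_bound {d : ℕ} (hd : 1 < d) (hS : oddRecipSum d < 1 / 2) :
    (jacobsthal d : ℝ) ≤
      2 * ((d : ℝ) / (Nat.totient d : ℝ)) * (d.primeFactors.card : ℝ) := by
  have hd0 : d ≠ 0 := by omega
  have hφ : (0 : ℝ) < Nat.totient d := by exact_mod_cast Nat.totient_pos.mpr (by omega)
  have hω : 0 < d.primeFactors.card := Finset.card_pos.mpr (Nat.nonempty_primeFactors.mpr hd)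
  set P := d.primeFactors.filter (· ≠ 2) with hPdef
  have hPprime : ∀ q ∈ P, q.Prime ∧ q ≠ 2 := fun q hq ↦
    ⟨Nat.prime_of_mem_primeFactors (Finset.mem_filter.mp hq).1, (Finset.mem_filter.mp hq).2⟩
  have hsum (M : ℕ) : ∑ q ∈ P, ((M : ℝ) / q + 1) = M * oddRecipSum d + P.card := by
    rw [Finset.sum_add_distrib, oddRecipSum, Finset.mul_sum, ← hPdef]
    simp [div_eq_mul_inv]
  by_cases h2 : 2 ∣ d
  · have hmem : 2 ∈ d.primeFactors := Nat.mem_primeFactors.mpr ⟨Nat.prime_two, h2, hd0⟩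
    have hcard : P.card + 1 = d.primeFactors.card := by
      have : P = d.primeFactors.erase 2 := by
        ext q; simp [hPdef, and_comm]
      rw [this, Finset.card_erase_add_one hmem]
    have hhalf : (2 : ℝ) * Nat.totient d ≤ d := by
      have h1 := Nat.totient_eq_mul_prod_factors d
      rw [← Finset.mul_prod_erase _ _ hmem] at h1
      have h3 : ∏ p ∈ d.primeFactors.erase 2, (1 - (p : ℚ)⁻¹) ≤ 1 := by
        refine Finset.prod_le_one (fun p hp ↦ ?_) (fun p hp ↦ ?_)
        · have : (1 : ℚ) ≤ p := by
            exact_mod_cast (Nat.prime_of_mem_primeFactors (Finset.mem_of_mem_erase hp)).one_lt.le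
          simpa using inv_le_one_of_one_le₀ this
        · have : (0 : ℚ) ≤ (p : ℚ)⁻¹ := by positivity
          linarith
      have h4 : (2 : ℚ) * Nat.totient d ≤ d := by
        rw [h1]
        have : (0 : ℚ) ≤ d := by positivity
        norm_num
        nlinarith
      exact_mod_cast h4
    have hj : jacobsthal d ≤ 4 * d.primeFactors.card := by
      refine Nat.sInf_le ⟨by omega, fun b ↦ ?_⟩
      obtain ⟨j, hj1, hj2, hj3⟩ := exists_avoiding P (fun q hq ↦ (hPprime q hq).1.pos)
        (fun q ↦ ((q : ℤ) - 1) / 2) ((b - 1) / 2) (2 * d.primeFactors.card) (by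
          rw [hsum, ← hcard]
          push_cast
          have : (0 : ℝ) ≤ P.card := by positivity
          nlinarith)
      refine ⟨2 * j + 1, by omega, by push_cast at hj2 ⊢; omega,
        isCoprime_of_forall_prime hd0 fun q hq hqk ↦ ?_⟩
      by_cases hq2 : q = 2
      · subst hq2; omega
      · have hqP : q ∈ P := Finset.mem_filter.mpr ⟨hq, hq2⟩
        refine hj3 q hqP ?_
        have hodd : q % 2 = 1 := ((hPprime q hqP).1.eq_two_or_odd).resolve_left hq2
        have hdvd : (q : ℤ) ∣ 2 * (((q : ℤ) - 1) / 2 - j) := by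
          have : 2 * (((q : ℤ) - 1) / 2 - j) = q - (2 * j + 1) := by omega
          rw [this]
          exact dvd_sub_self_left.mpr hqk
        have hcop : IsCoprime (q : ℤ) 2 := by
          rw [Int.isCoprime_iff_gcd_eq_one]
          exact_mod_cast (Nat.coprime_primes (hPprime q hqP).1 Nat.prime_two).mpr hq2
        exact Int.modEq_iff_dvd.mpr (hcop.dvd_of_dvd_mul_left hdvd)
    have hj' : (jacobsthal d : ℝ) ≤ 4 * d.primeFactors.card := by exact_mod_cast hj
    have : (2 : ℝ) ≤ (d : ℝ) / Nat.totient d := by rwa [le_div_iff₀ hφ]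
    have hω' : (0 : ℝ) ≤ d.primeFactors.card := by positivity
    nlinarith
  · have hP : P = d.primeFactors := by
      refine Finset.filter_true_of_mem fun q hq h ↦ h2 ?_
      exact h ▸ Nat.dvd_of_mem_primeFactors hq
    have hj : jacobsthal d ≤ 2 * d.primeFactors.card := by
      refine Nat.sInf_le ⟨by omega, fun b ↦ ?_⟩
      obtain ⟨j, hj1, hj2, hj3⟩ := exists_avoiding P (fun q hq ↦ (hPprime q hq).1.pos)
        (fun _ ↦ 0) b (2 * d.primeFactors.card) (by
          rw [hsum, hP]
          push_cast
          have : (0 : ℝ) < d.primeFactors.card := by exact_mod_cast hω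
          nlinarith)
      refine ⟨j, hj1, hj2, isCoprime_of_forall_prime hd0 fun q hq hqk ↦ ?_⟩
      exact hj3 q (hP ▸ hq) (Int.modEq_zero_iff_dvd.mpr hqk)
    have hj' : (jacobsthal d : ℝ) ≤ 2 * d.primeFactors.card := by exact_mod_cast hj
    have : (1 : ℝ) ≤ (d : ℝ) / Nat.totient d := by
      rw [le_div_iff₀ hφ, one_mul]; exact_mod_cast Nat.totient_le d
    have hω' : (0 : ℝ) ≤ d.primeFactors.card := by positivity
    nlinarith

lemma oddRecipSum_mono {d n : ℕ} (h : d ∣ n) (hn : n ≠ 0) : oddRecipSum d ≤ oddRecipSum n :=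
  Finset.sum_le_sum_of_subset_of_nonneg
    (Finset.filter_subset_filter _ (Nat.primeFactors_mono h hn)) fun _ _ _ ↦ by positivity

/-! ### The Fejér kernel -/

/-- The Fejér kernel at height `T`, written as the cosine transform of the triangle function
`t ↦ 1 - t / T` on `[0, T]`; it equals `(1 - cos (T u)) / (T u²)` for `u ≠ 0`. -/
noncomputable def fejer (T u : ℝ) : ℝ := ∫ t in (0 : ℝ)..T, (1 - t / T) * Real.cos (t * u)

lemma fejer_eq {T u : ℝ} (hT : 0 < T) (hu : u ≠ 0) :
    fejer T u = (1 - Real.cos (T * u)) / (T * u ^ 2) := by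
  have hd (t : ℝ) : HasDerivAt
      (fun t ↦ (1 - t / T) * (Real.sin (t * u) / u) - Real.cos (t * u) / (T * u ^ 2))
      ((1 - t / T) * Real.cos (t * u)) t := by
    have h1 : HasDerivAt (fun t : ℝ ↦ t * u) u t := by simpa using (hasDerivAt_id t).mul_const u
    have h2 : HasDerivAt (fun t : ℝ ↦ 1 - t / T) (-(1 / T)) t := by
      simpa using ((hasDerivAt_id t).div_const T).const_sub 1
    have h3 := (h2.mul (h1.sin.div_const u)).sub (h1.cos.div_const (T * u ^ 2))
    refine h3.congr_deriv ?_
    field_simp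
    ring
  rw [fejer, intervalIntegral.integral_eq_sub_of_hasDerivAt (fun t _ ↦ hd t)
    (Continuous.intervalIntegrable (by fun_prop) _ _)]
  simp [hT.ne']
  ring

lemma fejer_zero {T : ℝ} (hT : 0 < T) : fejer T 0 = T / 2 := by
  have hd (t : ℝ) : HasDerivAt (fun t ↦ t - t ^ 2 / (2 * T)) (1 - t / T) t := by
    refine ((hasDerivAt_id t).sub (((hasDerivAt_id t).pow 2).div_const (2 * T))).congr_deriv ?_
    simp
    field_simp
  simp only [fejer, mul_zero, Real.cos_zero, mul_one]
  rw [intervalIntegral.integral_eq_sub_of_hasDerivAt (fun t _ ↦ hd t)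
    (Continuous.intervalIntegrable (by fun_prop) _ _)]
  field_simp
  ring

lemma fejer_nonneg {T : ℝ} (hT : 0 < T) (u : ℝ) : 0 ≤ fejer T u := by
  rcases eq_or_ne u 0 with rfl | hu
  · rw [fejer_zero hT]; positivity
  · rw [fejer_eq hT hu]
    have := Real.cos_le_one (T * u)
    exact div_nonneg (by linarith) (by positivity)

lemma fejer_le {T : ℝ} (hT : 0 < T) (u : ℝ) : fejer T u ≤ T / 2 := by
  rcases eq_or_ne u 0 with rfl | hu
  · rw [fejer_zero hT]
  · rw [fejer_eq hT hu, div_le_iff₀ (by positivity)]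
    have := Real.one_sub_sq_div_two_le_cos (x := T * u)
    linarith [this, mul_pow T u 2]

lemma fejer_le_of_sq_ge {T u : ℝ} (hT : 0 < T) (hu : u ≠ 0) :
    fejer T u ≤ 2 / T * (1 / u ^ 2) := by
  rw [fejer_eq hT hu, div_mul_div_comm, mul_one]
  have := Real.neg_one_le_cos (T * u)
  gcongr
  linarith

lemma le_fejer {T u : ℝ} (hT : 0 < T) (hu : |T * u| ≤ 1) : T / 4 ≤ fejer T u := by
  rcases eq_or_ne u 0 with rfl | hu0
  · rw [fejer_zero hT]; linarith
  · rw [fejer_eq hT hu0, le_div_iff₀ (by positivity)]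
    have h1 := (abs_le.mp (Real.cos_bound hu)).2
    have h2 : |T * u| ^ 4 ≤ (T * u) ^ 2 := by
      rw [← sq_abs (T * u)]
      exact pow_le_pow_of_le_one (abs_nonneg _) hu (by norm_num)
    nlinarith [sq_nonneg (T * u)]

/-- Pairing a Dirichlet series on the line `Re s = σ > 1` with the triangle function yields the
coefficients weighted by the Fejér kernel centred at `log n = L`. -/
lemma hasSum_fejer {T : ℝ} (hT : 0 < T) (L σ : ℝ) (hσ0 : 0 < σ) (f : ℕ → ℝ)
    (hf : LSeriesSummable (fun n ↦ (f n : ℂ)) σ) :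
    HasSum (fun n : ℕ ↦ f n / (n : ℝ) ^ σ * fejer T (Real.log n - L))
      (∫ t in (0 : ℝ)..T, ((1 - t / T : ℝ) : ℂ) * Complex.exp (t * L * Complex.I) *
        LSeries (fun n ↦ (f n : ℂ)) (σ + t * Complex.I)).re := by
  set g : ℕ → ℂ := fun n ↦ (f n : ℂ) with hg
  have hcont (n : ℕ) : Continuous fun t : ℝ ↦ ((1 - t / T : ℝ) : ℂ) *
      Complex.exp (t * L * Complex.I) * LSeries.term g (σ + t * Complex.I) n := by
    rcases eq_or_ne n 0 with rfl | hn
    · simp only [LSeries.term_zero, mul_zero]; fun_prop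
    · have hn' : (n : ℂ) ≠ 0 := by exact_mod_cast hn
      simp only [LSeries.term_of_ne_zero hn]
      have h1 : Continuous fun t : ℝ ↦ (n : ℂ) ^ ((σ : ℂ) + t * Complex.I) :=
        Continuous.const_cpow (by fun_prop) (Or.inl hn')
      refine Continuous.mul (by fun_prop) (continuous_const.div h1 fun t ↦ ?_)
      simp [Complex.cpow_eq_zero_iff, hn]
  let F : ℕ → C(ℝ, ℂ) := fun n ↦ ⟨_, hcont n⟩
  have hnorm (t : ℝ) (n : ℕ) : ‖LSeries.term g (σ + t * Complex.I) n‖ =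
      ‖LSeries.term g σ n‖ := by
    rw [LSeries.norm_term_eq, LSeries.norm_term_eq]; simp
  have hsum := intervalIntegral.hasSum_intervalIntegral_of_summable_norm
    (a := 0) (b := T) (f := F) (by
      refine Summable.of_nonneg_of_le (fun _ ↦ norm_nonneg _) (fun n ↦ ?_) hf.norm
      refine (ContinuousMap.norm_le _ (norm_nonneg _)).mpr fun ⟨t, ht⟩ ↦ ?_
      have ht' : t ∈ Set.Icc 0 T := by
        have : t ∈ Set.uIcc 0 T := ht
        rwa [Set.uIcc_of_le hT.le] at this
      simp only [F, ContinuousMap.restrict_apply, ContinuousMap.coe_mk, norm_mul, hnorm]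
      have h1 : ‖((1 - t / T : ℝ) : ℂ)‖ ≤ 1 := by
        rw [Complex.norm_real, Real.norm_eq_abs, abs_le]
        have h0 : 0 ≤ t / T := div_nonneg ht'.1 hT.le
        have h1 : t / T ≤ 1 := (div_le_one hT).mpr ht'.2
        constructor <;> linarith
      have h2 : ‖Complex.exp (t * L * Complex.I)‖ = 1 := by
        simpa using Complex.norm_exp_ofReal_mul_I (t * L)
      rw [h2, mul_one]
      exact mul_le_of_le_one_left (norm_nonneg _) h1)
  have hre := Complex.hasSum_re hsum
  simp only [F, ContinuousMap.coe_mk] at hre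
  convert hre using 1
  · funext n
    rcases eq_or_ne n 0 with rfl | hn
    · simp [Real.zero_rpow hσ0.ne']
    · have hn0 : (0 : ℝ) < n := by exact_mod_cast Nat.pos_of_ne_zero hn
      have hint : IntervalIntegrable (fun t : ℝ ↦ ((1 - t / T : ℝ) : ℂ) *
        Complex.exp (t * L * Complex.I) * LSeries.term g (σ + t * Complex.I) n)
        MeasureTheory.volume 0 T := (hcont n).intervalIntegrable _ _
      have := Complex.reCLM.intervalIntegral_comp_comm hint
      simp only [Complex.reCLM_apply] at this
      rw [← this, fejer, ← intervalIntegral.integral_const_mul]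
      refine intervalIntegral.integral_congr fun t _ ↦ ?_
      simp only [LSeries.term_of_ne_zero hn, hg]
      have hpow : (n : ℂ) ^ ((σ : ℂ) + t * Complex.I) =
          ((n : ℝ) ^ σ : ℝ) * Complex.exp (t * Real.log n * Complex.I) := by
        rw [Complex.cpow_def_of_ne_zero (by exact_mod_cast hn), mul_add, Complex.exp_add,
          Real.rpow_def_of_pos hn0, Complex.ofReal_exp, Complex.natCast_log]
        push_cast
        congr 2
        ring
      have hexp : Complex.exp (t * L * Complex.I) / Complex.exp (t * Real.log n * Complex.I) =
          Complex.exp ((-(t * (Real.log n - L)) : ℝ) * Complex.I) := by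
        rw [← Complex.exp_sub]; congr 1; push_cast; ring
      have hall : ((1 - t / T : ℝ) : ℂ) * Complex.exp (t * L * Complex.I) *
          ((f n : ℂ) / (n : ℂ) ^ ((σ : ℂ) + t * Complex.I)) =
          (((1 - t / T) * (f n / (n : ℝ) ^ σ) : ℝ) : ℂ) *
            Complex.exp ((-(t * (Real.log n - L)) : ℝ) * Complex.I) := by
        rw [hpow, ← hexp]
        push_cast
        rw [div_mul_eq_div_div]
        ring
      rw [hall, Complex.re_ofReal_mul, Complex.exp_ofReal_mul_I_re, Real.cos_neg]
      ring
  · congr 1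
    refine intervalIntegral.integral_congr fun t _ ↦ ?_
    simp only [LSeries, tsum_mul_left, hg]

/-! ### The Chebyshev tail and the boundary term -/

open ArithmeticFunction in
/-- Uniform Chebyshev tail bound: outside the window `-1 ≤ log n - L < 1` the Fejér-weighted
sum of `Λ n / n` is `O(1 / T)`, because each logarithmic block of unit length carries bounded
`Λ n / n`-mass and the kernel is at most `2 / (T u²)`. -/
lemma exists_tail_bound : ∃ C : ℝ, 1 ≤ C ∧ ∀ T : ℝ, 0 < T → ∀ (L : ℝ) (s : Finset ℕ),
    ∑ n ∈ s.filter (fun n : ℕ ↦ ⌊Real.log n - L⌋ ≠ 0 ∧ ⌊Real.log n - L⌋ ≠ -1),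
      vonMangoldt n / n * fejer T (Real.log n - L) ≤ C / T := by
  have hsummable : Summable fun k : ℤ ↦ 1 / (k : ℝ) ^ 2 :=
    Real.summable_one_div_int_pow.mpr one_lt_two
  set S : ℝ := ∑' k : ℤ, 1 / (k : ℝ) ^ 2 with hSdef
  have hS : 0 ≤ S := tsum_nonneg fun _ ↦ by positivity
  set D : ℝ := Real.exp 1 * (Real.log 4 + 4) with hD
  have hD0 : 0 ≤ D := by positivity
  refine ⟨8 * S * D + 1, by nlinarith [mul_nonneg hS hD0], fun T hT L s ↦ ?_⟩
  set s' := s.filter (fun n : ℕ ↦ ⌊Real.log n - L⌋ ≠ 0 ∧ ⌊Real.log n - L⌋ ≠ -1) with hs'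
  have hterm : ∀ n ∈ s', vonMangoldt n / n * fejer T (Real.log n - L) ≤
      8 / T * (1 / ((⌊Real.log n - L⌋ : ℤ) : ℝ) ^ 2 * (vonMangoldt n / n)) := by
    intro n hn
    obtain ⟨h0, h1⟩ := (Finset.mem_filter.mp hn).2
    set u := Real.log n - L
    have hfl := Int.floor_le u
    have hfl' := Int.lt_floor_add_one u
    have hΛ : 0 ≤ vonMangoldt n / (n : ℝ) := div_nonneg vonMangoldt_nonneg (by positivity)
    have hkey : 0 < u ^ 2 ∧ ((⌊u⌋ : ℤ) : ℝ) ^ 2 ≤ 4 * u ^ 2 := by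
      rcases lt_or_gt_of_ne h0 with h | h
      · have h2 : ⌊u⌋ ≤ -2 := by omega
        have h2' : ((⌊u⌋ : ℤ) : ℝ) ≤ -2 := by exact_mod_cast h2
        constructor <;> nlinarith
      · have h2' : (1 : ℝ) ≤ ((⌊u⌋ : ℤ) : ℝ) := by exact_mod_cast h
        constructor <;> nlinarith
    have hu0 : u ≠ 0 := by rintro h; rw [h] at hkey; simp at hkey
    have hk0 : (0 : ℝ) < ((⌊u⌋ : ℤ) : ℝ) ^ 2 := by
      have : ((⌊u⌋ : ℤ) : ℝ) ≠ 0 := by exact_mod_cast h0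
      positivity
    have hf : fejer T u ≤ 8 / T * (1 / ((⌊u⌋ : ℤ) : ℝ) ^ 2) := by
      refine (fejer_le_of_sq_ge hT hu0).trans ?_
      have : 1 / u ^ 2 ≤ 4 * (1 / ((⌊u⌋ : ℤ) : ℝ) ^ 2) := by
        rw [mul_one_div, div_le_div_iff₀ hkey.1 hk0]; linarith [hkey.2]
      calc 2 / T * (1 / u ^ 2) ≤ 2 / T * (4 * (1 / ((⌊u⌋ : ℤ) : ℝ) ^ 2)) := by gcongr
        _ = _ := by ring
    calc vonMangoldt n / n * fejer T u ≤
        vonMangoldt n / n * (8 / T * (1 / ((⌊u⌋ : ℤ) : ℝ) ^ 2)) := by gcongr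
      _ = _ := by ring
  have hblock : ∀ k : ℤ,
      ∑ n ∈ s'.filter (fun n : ℕ ↦ ⌊Real.log (n : ℝ) - L⌋ = k), vonMangoldt n / (n : ℝ) ≤ D := by
    intro k
    have h1 : ∀ n ∈ s'.filter (fun n : ℕ ↦ ⌊Real.log (n : ℝ) - L⌋ = k),
        vonMangoldt n / (n : ℝ) ≤ vonMangoldt n * Real.exp (-(L + k)) := by
      intro n hn
      have hk := (Finset.mem_filter.mp hn).2
      rcases Nat.eq_zero_or_pos n with rfl | hn0
      · simp
      · have hfl := Int.floor_le (Real.log n - L)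
        rw [hk] at hfl
        have hn' : (0 : ℝ) < n := by exact_mod_cast hn0
        rw [div_eq_mul_inv]
        refine mul_le_mul_of_nonneg_left ?_ vonMangoldt_nonneg
        rw [Real.exp_neg]
        refine inv_anti₀ (Real.exp_pos _) ?_
        rw [← Real.le_log_iff_exp_le hn']
        linarith
    have h2 : ∑ n ∈ s'.filter (fun n : ℕ ↦ ⌊Real.log (n : ℝ) - L⌋ = k), vonMangoldt n ≤
        Chebyshev.psi (Real.exp (L + k + 1)) := by
      rw [Chebyshev.psi_eq_sum_Icc]
      refine Finset.sum_le_sum_of_subset_of_nonneg (fun n hn ↦ ?_)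
        fun _ _ _ ↦ vonMangoldt_nonneg
      have hk := (Finset.mem_filter.mp hn).2
      rcases Nat.eq_zero_or_pos n with rfl | hn0
      · simp
      · have hfl := Int.lt_floor_add_one (Real.log n - L)
        rw [hk] at hfl
        have hn' : (0 : ℝ) < n := by exact_mod_cast hn0
        simp only [Finset.mem_Icc, zero_le, true_and]
        refine Nat.le_floor ?_
        rw [← Real.log_le_iff_le_exp hn']
        linarith
    calc _ ≤ ∑ n ∈ s'.filter (fun n : ℕ ↦ ⌊Real.log (n : ℝ) - L⌋ = k),
          vonMangoldt n * Real.exp (-(L + k)) := Finset.sum_le_sum h1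
      _ ≤ Chebyshev.psi (Real.exp (L + k + 1)) * Real.exp (-(L + k)) := by
          rw [← Finset.sum_mul]; gcongr
      _ ≤ (Real.log 4 + 4) * Real.exp (L + k + 1) * Real.exp (-(L + k)) := by
          gcongr
          exact Chebyshev.psi_le_const_mul_self (Real.exp_pos _).le
      _ = D := by
          rw [mul_assoc, ← Real.exp_add, hD, mul_comm]; congr 2; ring
  calc _ ≤ ∑ n ∈ s', 8 / T * (1 / ((⌊Real.log n - L⌋ : ℤ) : ℝ) ^ 2 * (vonMangoldt n / n)) :=
        Finset.sum_le_sum hterm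
    _ = 8 / T * ∑ k ∈ s'.image (fun n : ℕ ↦ ⌊Real.log (n : ℝ) - L⌋),
          ∑ n ∈ s'.filter (fun n : ℕ ↦ ⌊Real.log (n : ℝ) - L⌋ = k),
            (1 / ((⌊Real.log n - L⌋ : ℤ) : ℝ) ^ 2 * (vonMangoldt n / n)) := by
        rw [← Finset.mul_sum]
        congr 1
        exact (Finset.sum_fiberwise_of_maps_to
          (fun n hn ↦ Finset.mem_image_of_mem _ hn) _).symm
    _ ≤ 8 / T * ∑ k ∈ s'.image (fun n : ℕ ↦ ⌊Real.log (n : ℝ) - L⌋), 1 / (k : ℝ) ^ 2 * D := by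
        gcongr with k hk
        rw [Finset.sum_congr rfl (g := fun n : ℕ ↦ 1 / (k : ℝ) ^ 2 * (vonMangoldt n / n))
          (fun n hn ↦ by rw [(Finset.mem_filter.mp hn).2]), ← Finset.mul_sum]
        exact mul_le_mul_of_nonneg_left (hblock k) (by positivity)
    _ ≤ 8 / T * (S * D) := by
        rw [← Finset.sum_mul]
        gcongr
        exact hsummable.sum_le_tsum _ fun _ _ ↦ by positivity
    _ ≤ (8 * S * D + 1) / T := by
        rw [div_mul_eq_mul_div]
        gcongr
        linarith

/-- Riemann–Lebesgue for the boundary term of the Tauberian argument. -/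
lemma tendsto_boundary_term (T : ℝ) (hT : 0 < T) (H : ℝ → ℂ) :
    Filter.Tendsto (fun L : ℝ ↦ (∫ t in (0 : ℝ)..T, ((1 - t / T : ℝ) : ℂ) *
      Complex.exp (t * L * Complex.I) * H t).re) Filter.atTop (nhds 0) := by
  have h := Real.tendsto_integral_exp_smul_cocompact
    ((Set.Ioc 0 T).indicator fun t : ℝ ↦ ((1 - t / T : ℝ) : ℂ) * H t)
  have hlim : Filter.Tendsto (fun L : ℝ ↦ -(L / (2 * Real.pi))) Filter.atTop
      (Filter.cocompact ℝ) := by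
    have h1 : Filter.Tendsto (fun L : ℝ ↦ -(L / (2 * Real.pi))) Filter.atTop Filter.atBot :=
      Filter.tendsto_neg_atTop_atBot.comp (Filter.tendsto_id.atTop_div_const (by positivity))
    exact h1.mono_right atBot_le_cocompact
  have h2 := (Complex.continuous_re.tendsto 0).comp (h.comp hlim)
  simp only [Complex.zero_re] at h2
  refine h2.congr fun L ↦ ?_
  simp only [Function.comp]
  congr 1
  rw [intervalIntegral.integral_of_le hT.le, ← MeasureTheory.integral_indicator measurableSet_Ioc]
  refine MeasureTheory.integral_congr_ae (Filter.Eventually.of_forall fun t ↦ ?_)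
  simp only [Set.indicator_apply]
  split_ifs
  · rw [Circle.smul_def, Real.fourierChar_apply, smul_eq_mul]
    have : Complex.exp (((2 * Real.pi * -(t * -(L / (2 * Real.pi))) : ℝ) : ℂ) * Complex.I) =
        Complex.exp (t * L * Complex.I) := by
      congr 2
      rw [← Complex.ofReal_mul, Complex.ofReal_inj]
      field_simp
    rw [this]
    ring
  · simp

/-! ### A Tauberian lower bound -/

open ArithmeticFunction in
/-- Upper half of the Tauberian comparison: for `0 ≤ f ≤ Λ` the Fejér-weighted Dirichlet series
is controlled by the summatory function of `f` up to `exp (L + 1)` and the Chebyshev tail. -/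
lemma tsum_fejer_le {C : ℝ} {T L σ : ℝ} (hT : 0 < T) (hσ : 1 < σ)
    (hC : ∀ s : Finset ℕ,
      ∑ n ∈ s.filter (fun n : ℕ ↦ ⌊Real.log n - L⌋ ≠ 0 ∧ ⌊Real.log n - L⌋ ≠ -1),
        vonMangoldt n / n * fejer T (Real.log n - L) ≤ C / T)
    {f : ℕ → ℝ} (hf0 : ∀ n, 0 ≤ f n) (hf : ∀ n, f n ≤ vonMangoldt n) :
    ∑' n : ℕ, f n / (n : ℝ) ^ σ * fejer T (Real.log n - L) ≤
      T / 2 * Real.exp (1 - L) * ∑ n ∈ Finset.range (⌊Real.exp (L + 1)⌋₊ + 1), f n + C / T := by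
  have hf00 : f 0 = 0 := le_antisymm (by simpa using hf 0) (hf0 0)
  have hle1 : ∀ n : ℕ, f n / (n : ℝ) ^ σ ≤ f n / n := by
    intro n
    rcases Nat.eq_zero_or_pos n with rfl | hn
    · simp [hf00]
    · have h1 : (1 : ℝ) ≤ n := by exact_mod_cast hn
      refine div_le_div_of_nonneg_left (hf0 n) (by positivity) ?_
      simpa using Real.rpow_le_rpow_of_exponent_le h1 hσ.le
  refine Real.tsum_le_of_sum_le
    (fun n ↦ mul_nonneg (div_nonneg (hf0 n) (by positivity)) (fejer_nonneg hT _)) fun s ↦ ?_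
  rw [← Finset.sum_filter_add_sum_filter_not s
    (fun n : ℕ ↦ ⌊Real.log n - L⌋ ≠ 0 ∧ ⌊Real.log n - L⌋ ≠ -1), add_comm]
  refine add_le_add ?_ ?_
  · calc _ ≤ ∑ n ∈ s.filter (fun n : ℕ ↦ ¬ (⌊Real.log n - L⌋ ≠ 0 ∧ ⌊Real.log n - L⌋ ≠ -1)),
          T / 2 * Real.exp (1 - L) * f n := by
          refine Finset.sum_le_sum fun n hn ↦ ?_
          have hk := (Finset.mem_filter.mp hn).2
          rcases Nat.eq_zero_or_pos n with rfl | hn0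
          · simp [hf00]
          · have hn' : (0 : ℝ) < n := by exact_mod_cast hn0
            have hfl := Int.floor_le (Real.log n - L)
            have hk' : -1 ≤ ⌊Real.log n - L⌋ := by omega
            have hk'' : (-1 : ℝ) ≤ ((⌊Real.log n - L⌋ : ℤ) : ℝ) := by exact_mod_cast hk'
            have hinv : 1 / (n : ℝ) ≤ Real.exp (1 - L) := by
              rw [one_div, ← neg_sub, Real.exp_neg]
              refine inv_anti₀ (Real.exp_pos _) ?_
              rw [← Real.le_log_iff_exp_le hn']
              linarith
            calc f n / (n : ℝ) ^ σ * fejer T (Real.log n - L) ≤ f n / n * (T / 2) :=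
                  mul_le_mul (hle1 n) (fejer_le hT _) (fejer_nonneg hT _)
                    (div_nonneg (hf0 n) hn'.le)
              _ = f n * (T / 2) * (1 / n) := by ring
              _ ≤ f n * (T / 2) * Real.exp (1 - L) := by
                  refine mul_le_mul_of_nonneg_left hinv (mul_nonneg (hf0 n) (by positivity))
              _ = _ := by ring
      _ ≤ _ := by
          rw [← Finset.mul_sum]
          refine mul_le_mul_of_nonneg_left ?_ (by positivity)
          refine Finset.sum_le_sum_of_subset_of_nonneg (fun n hn ↦ ?_) fun n _ _ ↦ hf0 n
          have hk := (Finset.mem_filter.mp hn).2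
          rw [Finset.mem_range, Nat.lt_succ_iff]
          rcases Nat.eq_zero_or_pos n with rfl | hn0
          · exact Nat.zero_le _
          · have hn' : (0 : ℝ) < n := by exact_mod_cast hn0
            have hfl := Int.lt_floor_add_one (Real.log n - L)
            have hk' : ⌊Real.log n - L⌋ ≤ 0 := by omega
            have hk'' : ((⌊Real.log n - L⌋ : ℤ) : ℝ) ≤ 0 := by exact_mod_cast hk'
            refine Nat.le_floor ?_
            rw [← Real.log_le_iff_le_exp hn']
            linarith
  · refine le_trans (Finset.sum_le_sum fun n _ ↦ ?_) (hC s)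
    exact mul_le_mul_of_nonneg_right
      ((hle1 n).trans (div_le_div_of_nonneg_right (hf n) n.cast_nonneg)) (fejer_nonneg hT _)

/-- Lower half of the comparison: for the zeta function the Fejér-weighted series is bounded
below by the contribution of the integers in `(exp L, exp (L + 1 / T)]`. -/
lemma le_tsum_fejer {T L σ : ℝ} (hT : 1 ≤ T) (hσ : 1 < σ) (hL : 2 * T ≤ Real.exp L) :
    Real.exp L / 8 * (Real.exp (L + 1)) ^ (-σ) ≤
      ∑' n : ℕ, (1 : ℝ) / (n : ℝ) ^ σ * fejer T (Real.log n - L) := by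
  have hT0 : 0 < T := by linarith
  have hs : LSeriesSummable (fun _ : ℕ ↦ ((1 : ℝ) : ℂ)) (σ : ℂ) := by
    have := (LSeriesSummable_one_iff (s := (σ : ℂ))).mpr (by simpa using hσ)
    refine this.congr' σ (Filter.Eventually.of_forall fun n ↦ by simp)
  have hsummable := (hasSum_fejer hT0 L σ (by linarith) (fun _ ↦ 1) hs).summable
  set x := Real.exp L with hx
  have hx0 : 0 < x := Real.exp_pos L
  set y := Real.exp (L + 1 / T) with hy
  have hyx : x + x / T ≤ y := by
    rw [hy, Real.exp_add, ← hx]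
    have := Real.add_one_le_exp (1 / T)
    calc x + x / T = x * (1 / T + 1) := by ring
      _ ≤ _ := by gcongr
  have hcount : x / (2 * T) ≤ ((Finset.Ioc ⌊x⌋₊ ⌊y⌋₊).card : ℝ) := by
    have h1 : (⌊y⌋₊ : ℝ) ≤ (⌊y⌋₊ - ⌊x⌋₊ : ℕ) + (⌊x⌋₊ : ℝ) := by
      exact_mod_cast (by omega : ⌊y⌋₊ ≤ (⌊y⌋₊ - ⌊x⌋₊) + ⌊x⌋₊)
    have h2 := Nat.lt_floor_add_one y
    have h3 := Nat.floor_le hx0.le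
    rw [Nat.card_Ioc]
    have h4 : x / T = 2 * (x / (2 * T)) := by field_simp
    have h5 : 1 ≤ x / (2 * T) := by rw [le_div_iff₀ (by positivity)]; linarith
    linarith
  have hterm : ∀ n ∈ Finset.Ioc ⌊x⌋₊ ⌊y⌋₊, (Real.exp (L + 1)) ^ (-σ) * (T / 4) ≤
      (1 : ℝ) / (n : ℝ) ^ σ * fejer T (Real.log n - L) := by
    intro n hn
    obtain ⟨h1, h2⟩ := Finset.mem_Ioc.mp hn
    have h1' : x < n := (Nat.floor_lt hx0.le).mp h1
    have h2' : (n : ℝ) ≤ y := (Nat.le_floor_iff (Real.exp_pos _).le).mp h2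
    have hn0 : (0 : ℝ) < n := hx0.trans h1'
    have hl1 : L < Real.log n := (Real.lt_log_iff_exp_lt hn0).mpr h1'
    have hl2 : Real.log n ≤ L + 1 / T := (Real.log_le_iff_le_exp hn0).mpr h2'
    have hT1 : 1 / T ≤ 1 := by rw [div_le_one hT0]; exact hT
    have hn2 : (n : ℝ) ≤ Real.exp (L + 1) := h2'.trans (Real.exp_le_exp.mpr (by linarith))
    refine mul_le_mul ?_ ?_ (by positivity) (by positivity)
    · rw [Real.rpow_neg (Real.exp_pos _).le, one_div]
      exact inv_anti₀ (by positivity) (Real.rpow_le_rpow hn0.le hn2 (by linarith))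
    · refine le_fejer hT0 ?_
      rw [abs_of_nonneg (mul_nonneg hT0.le (by linarith))]
      calc T * (Real.log n - L) ≤ T * (1 / T) := by gcongr; linarith
        _ = 1 := by field_simp
  calc x / 8 * (Real.exp (L + 1)) ^ (-σ)
      = x / (2 * T) * ((Real.exp (L + 1)) ^ (-σ) * (T / 4)) := by field_simp; ring
    _ ≤ ((Finset.Ioc ⌊x⌋₊ ⌊y⌋₊).card : ℝ) * ((Real.exp (L + 1)) ^ (-σ) * (T / 4)) := by
        gcongr
    _ ≤ ∑ n ∈ Finset.Ioc ⌊x⌋₊ ⌊y⌋₊, (1 : ℝ) / (n : ℝ) ^ σ * fejer T (Real.log n - L) := by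
        rw [← nsmul_eq_mul]; exact Finset.card_nsmul_le_sum _ _ _ hterm
    _ ≤ _ := hsummable.sum_le_tsum _ fun n _ ↦
        mul_nonneg (by positivity) (fejer_nonneg hT0 _)

open ArithmeticFunction Filter in
/-- A lower-bound version of the Wiener–Ikehara theorem. If `0 ≤ f ≤ Λ` and the Dirichlet series
of `f` minus `A ζ(s)` extends continuously to `Re s ≥ 1`, then the summatory function of `f` is
eventually at least `c A² X`, with an absolute `c > 0`. The square comes from taking the Fejér
kernel at height `T ≍ 1 / A`, so that the Chebyshev tail `O(1 / T)` is absorbed. -/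
theorem tauberian_lower_bound : ∃ c : ℝ, 0 < c ∧ ∀ (f : ℕ → ℝ), (∀ n, 0 ≤ f n) →
    (∀ n, f n ≤ vonMangoldt n) → ∀ A : ℝ, 0 < A → A ≤ 1 → ∀ G : ℂ → ℂ,
    ContinuousOn G {s | 1 ≤ s.re} →
    (∀ s : ℂ, 1 < s.re → LSeries (fun n ↦ (f n : ℂ)) s = A * riemannZeta s + G s) →
    ∀ᶠ X : ℝ in atTop, c * A ^ 2 * X ≤ ∑ n ∈ Finset.range (⌊X⌋₊ + 1), f n := by
  obtain ⟨C, hC1, hC⟩ := exists_tail_bound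
  set c₁ : ℝ := Real.exp (-1) / 8 with hc₁
  have hc₁0 : 0 < c₁ := by positivity
  have hc₁1 : c₁ ≤ 1 := by
    have : Real.exp (-1) ≤ 1 := Real.exp_le_one_iff.mpr (by norm_num)
    rw [hc₁]; linarith
  refine ⟨Real.exp (-2) * (c₁ ^ 2 / (4 * C)), by positivity,
    fun f hf0 hf A hA hA1 G hG hLG ↦ ?_⟩
  set T : ℝ := 4 * C / (A * c₁) with hTdef
  have hAc : 0 < A * c₁ := by positivity
  have hT1 : 1 ≤ T := by
    rw [hTdef, le_div_iff₀ hAc]; nlinarith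
  have hT0 : 0 < T := by linarith
  -- `G` precomposed with the retraction onto the closed half-plane is continuous everywhere.
  let G' : ℝ → ℝ → ℂ := fun σ t ↦ G (((max σ 1 : ℝ) : ℂ) + t * Complex.I)
  have hG' : Continuous (Function.uncurry G') := by
    refine hG.comp_continuous (f := fun p : ℝ × ℝ ↦ ((max p.1 1 : ℝ) : ℂ) + p.2 * Complex.I)
      (by fun_prop) fun p ↦ ?_
    simp
  let J : ℝ → ℝ → ℝ := fun L σ ↦ (∫ t in (0 : ℝ)..T, ((1 - t / T : ℝ) : ℂ) *
      Complex.exp (t * L * Complex.I) * G' σ t).re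
  have hJcont (L : ℝ) : Continuous (J L) := by
    refine Complex.continuous_re.comp ?_
    refine intervalIntegral.continuous_parametric_intervalIntegral_of_continuous' ?_ 0 T
    refine Continuous.mul ?_ hG'
    fun_prop
  have hfs (σ : ℝ) (hσ : 1 < σ) : LSeriesSummable (fun n ↦ (f n : ℂ)) (σ : ℂ) := by
    have h := LSeriesSummable_vonMangoldt (s := (σ : ℂ)) (by simpa using hσ)
    refine Summable.of_norm_bounded h.norm fun n ↦ LSeries.norm_term_le _ ?_
    rw [Complex.norm_of_nonneg (hf0 n), Complex.norm_of_nonneg vonMangoldt_nonneg]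
    exact hf n
  have hident (L σ : ℝ) (hσ : 1 < σ) :
      ∑' n : ℕ, f n / (n : ℝ) ^ σ * fejer T (Real.log n - L) =
        A * (∑' n : ℕ, (1 : ℝ) / (n : ℝ) ^ σ * fejer T (Real.log n - L)) + J L σ := by
    have hs1 : LSeriesSummable (fun _ : ℕ ↦ ((1 : ℝ) : ℂ)) (σ : ℂ) := by
      have := (LSeriesSummable_one_iff (s := (σ : ℂ))).mpr (by simpa using hσ)
      refine this.congr' σ (Filter.Eventually.of_forall fun n ↦ by simp)
    rw [(hasSum_fejer hT0 L σ (by linarith) f (hfs σ hσ)).tsum_eq,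
      (hasSum_fejer hT0 L σ (by linarith) (fun _ ↦ 1) hs1).tsum_eq, ← Complex.re_ofReal_mul,
      ← Complex.add_re, ← intervalIntegral.integral_const_mul]
    have hre (t : ℝ) : 1 < ((σ : ℂ) + t * Complex.I).re := by simpa using hσ
    have hone (t : ℝ) : LSeries (fun _ : ℕ ↦ ((1 : ℝ) : ℂ)) (σ + t * Complex.I) =
        riemannZeta (σ + t * Complex.I) := by
      rw [← LSeries_one_eq_riemannZeta (hre t)]
      congr 1
    have hζ : Continuous fun t : ℝ ↦ riemannZeta (σ + t * Complex.I) := by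
      refine continuous_iff_continuousAt.mpr fun t ↦ ?_
      refine ContinuousAt.comp (f := fun t : ℝ ↦ (σ : ℂ) + t * Complex.I)
        (differentiableAt_riemannZeta ?_).continuousAt (by fun_prop)
      intro h
      have := hre t
      rw [h] at this
      simp at this
    rw [← intervalIntegral.integral_add]
    · congr 1
      refine intervalIntegral.integral_congr fun t _ ↦ ?_
      rw [hone, hLG _ (hre t)]
      simp only [G', max_eq_left hσ.le]
      ring
    · simp_rw [hone]
      exact Continuous.intervalIntegrable (by fun_prop) _ _
    · refine Continuous.intervalIntegrable ?_ _ _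
      have : Continuous fun t ↦ G' σ t := hG'.comp (by fun_prop : Continuous fun t : ℝ ↦ (σ, t))
      fun_prop
  have hmain (L : ℝ) (hL : 2 * T ≤ Real.exp L) :
      A * c₁ + J L 1 ≤ T / 2 * Real.exp (1 - L) *
        ∑ n ∈ Finset.range (⌊Real.exp (L + 1)⌋₊ + 1), f n + C / T := by
    have hlim : Tendsto (fun σ : ℝ ↦ A * (Real.exp L / 8 * (Real.exp (L + 1)) ^ (-σ)) + J L σ)
        (nhdsWithin 1 (Set.Ioi 1)) (nhds (A * c₁ + J L 1)) := by
      have hc : Continuous fun σ : ℝ ↦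
          A * (Real.exp L / 8 * (Real.exp (L + 1)) ^ (-σ)) + J L σ := by
        have h1 : Continuous fun σ : ℝ ↦ (Real.exp (L + 1)) ^ (-σ) :=
          Continuous.rpow continuous_const continuous_neg fun _ ↦ Or.inl (Real.exp_pos _).ne'
        exact (continuous_const.mul (continuous_const.mul h1)).add (hJcont L)
      have := (hc.tendsto 1).mono_left (nhdsWithin_le_nhds (s := Set.Ioi 1))
      convert this using 3
      rw [hc₁, Real.rpow_neg_one, ← Real.exp_neg, div_mul_eq_mul_div, ← Real.exp_add]
      congr 3; ring
    refine le_of_tendsto hlim ?_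
    filter_upwards [self_mem_nhdsWithin] with σ hσ
    have hσ' : 1 < σ := hσ
    have h1 := tsum_fejer_le hT0 hσ' (hC T hT0 L) hf0 hf
    have h2 := le_tsum_fejer hT1 hσ' hL
    rw [hident L σ hσ'] at h1
    have h3 := mul_le_mul_of_nonneg_left h2 hA.le
    linarith
  have hJ : Tendsto (fun L ↦ J L 1) atTop (nhds 0) := tendsto_boundary_term T hT0 (G' 1)
  have hev : ∀ᶠ L : ℝ in atTop, Real.exp (-2) * (c₁ ^ 2 / (4 * C)) * A ^ 2 * Real.exp (L + 1) ≤
      ∑ n ∈ Finset.range (⌊Real.exp (L + 1)⌋₊ + 1), f n := by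
    filter_upwards [hJ.eventually (eventually_gt_nhds (show -(A * c₁ / 4) < 0 by linarith)),
      Real.tendsto_exp_atTop.eventually_ge_atTop (2 * T)] with L hL1 hL2
    have h := hmain L hL2
    set S := ∑ n ∈ Finset.range (⌊Real.exp (L + 1)⌋₊ + 1), f n
    have hCT : C / T = A * c₁ / 4 := by
      rw [hTdef]; field_simp
    have h2 : A * c₁ / 2 ≤ T / 2 * Real.exp (1 - L) * S := by linarith
    have h3 : Real.exp (-2) * Real.exp (L + 1) * Real.exp (1 - L) = 1 := by
      rw [← Real.exp_add, ← Real.exp_add, Real.exp_eq_one_iff]; ring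
    have h4 : A * c₁ / T = A ^ 2 * c₁ ^ 2 / (4 * C) := by
      rw [hTdef]; field_simp
    have h5 : A * c₁ / T ≤ Real.exp (1 - L) * S := by
      rw [div_le_iff₀ hT0]; linarith
    rw [h4] at h5
    calc _ = Real.exp (-2) * Real.exp (L + 1) * (A ^ 2 * c₁ ^ 2 / (4 * C)) := by ring
      _ ≤ Real.exp (-2) * Real.exp (L + 1) * (Real.exp (1 - L) * S) := by gcongr
      _ = S := by rw [← mul_assoc, h3, one_mul]
  have hlog : Tendsto (fun X : ℝ ↦ Real.log X - 1) atTop atTop :=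
    tendsto_atTop_add_const_right _ _ Real.tendsto_log_atTop
  filter_upwards [hlog.eventually hev, eventually_gt_atTop 0] with X hX hX0
  rwa [sub_add_cancel, Real.exp_log hX0] at hX

/-! ### Primes in unions of reduced residue classes -/

/-- `ζ(s) - 1/(s-1)`, with its limit filled in at the removable singularity `s = 1`. -/
noncomputable def zetaReg : ℂ → ℂ :=
  Function.update (fun s ↦ riemannZeta s - 1 / (s - 1)) 1 Real.eulerMascheroniConstant

lemma continuous_zetaReg : Continuous zetaReg := by
  refine continuous_iff_continuousAt.mpr fun s ↦ ?_
  rcases eq_or_ne s 1 with rfl | hs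
  · exact continuousAt_update_same.mpr tendsto_riemannZeta_sub_one_div
  · refine (continuousAt_update_of_ne hs).mpr ?_
    have := sub_ne_zero.mpr hs
    exact (differentiableAt_riemannZeta hs).continuousAt.sub
      (continuousAt_const.div (by fun_prop) this)

open ArithmeticFunction.vonMangoldt in
/-- The Dirichlet series of `Λ` restricted to a union of reduced residue classes differs from the
corresponding multiple of `ζ` by a function continuous up to the line `re s = 1`; this is where the
non-vanishing of Dirichlet `L`-functions on that line enters. -/
lemma exists_continuousOn_LSeries_residueClass {M : ℕ} [NeZero M] (C : Finset (ZMod M))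
    (hC : ∀ a ∈ C, IsUnit a) :
    ∃ G : ℂ → ℂ, ContinuousOn G {s | 1 ≤ s.re} ∧ ∀ s : ℂ, 1 < s.re →
      LSeries (fun n ↦ ((∑ a ∈ C, residueClass a n : ℝ) : ℂ)) s =
        ((C.card / M.totient : ℝ) : ℂ) * riemannZeta s + G s := by
  refine ⟨fun s ↦ ∑ a ∈ C, LFunctionResidueClassAux a s -
    ((C.card / M.totient : ℝ) : ℂ) * zetaReg s, ?_, fun s hs ↦ ?_⟩
  · exact (continuousOn_finsetSum _ fun a _ ↦ continuousOn_LFunctionResidueClassAux a).sub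
      (continuous_const.mul continuous_zetaReg).continuousOn
  · have h1 : (fun n ↦ ((∑ a ∈ C, residueClass a n : ℝ) : ℂ)) =
        ∑ a ∈ C, fun n ↦ (residueClass a n : ℂ) := by
      ext n; simp
    have hs1 : s ≠ 1 := by rintro rfl; simp at hs
    rw [h1, LSeries_sum]
    · have h2 : ∀ a ∈ C, LFunctionResidueClassAux a s =
          LSeries (fun n ↦ (residueClass a n : ℂ)) s - (M.totient : ℂ)⁻¹ / (s - 1) :=
        fun a ha ↦ eqOn_LFunctionResidueClassAux (hC a ha) hs
      beta_reduce
      rw [Finset.sum_congr rfl h2, zetaReg, Function.update_of_ne hs1, Finset.sum_sub_distrib,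
        Finset.sum_const, nsmul_eq_mul]
      push_cast
      ring
    · intro a _
      refine LSeriesSummable_of_abscissaOfAbsConv_lt_re ?_
      exact (abscissaOfAbsConv_residueClass_le_one a).trans_lt (by exact_mod_cast hs)

open ArithmeticFunction Filter in
/-- A Chebyshev-type lower bound for the primes in a union of reduced residue classes, with a
constant that does not depend on the modulus. -/
lemma exists_prime_count_lower_bound : ∃ c : ℝ, 0 < c ∧ ∀ (M : ℕ) [NeZero M]
    (C : Finset (ZMod M)), C.Nonempty → (∀ a ∈ C, IsUnit a) → ∀ᶠ x : ℕ in atTop,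
      c * (C.card / M.totient : ℝ) ^ 2 * (x / Real.log x) ≤
        ((Finset.range (x + 1)).filter fun p : ℕ ↦ p.Prime ∧ (p : ZMod M) ∈ C).card := by
  obtain ⟨c, hc, H⟩ := tauberian_lower_bound
  refine ⟨c / 2, by positivity, fun M _ C hCne hC ↦ ?_⟩
  set A : ℝ := C.card / M.totient with hA
  have hφ : (0 : ℝ) < M.totient := by exact_mod_cast Nat.totient_pos.mpr (NeZero.pos M)
  have hA0 : 0 < A := div_pos (by exact_mod_cast hCne.card_pos) hφ
  have hA1 : A ≤ 1 := by
    rw [hA, div_le_one hφ]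
    have h1 : C ⊆ Finset.univ.image (fun u : (ZMod M)ˣ ↦ (u : ZMod M)) := by
      intro a ha
      obtain ⟨u, rfl⟩ := hC a ha
      exact Finset.mem_image_of_mem _ (Finset.mem_univ u)
    have h2 := (Finset.card_le_card h1).trans Finset.card_image_le
    rw [Finset.card_univ, ZMod.card_units_eq_totient] at h2
    exact_mod_cast h2
  have hf (n : ℕ) : ∑ a ∈ C, vonMangoldt.residueClass a n =
      if (n : ZMod M) ∈ C then vonMangoldt n else 0 := by
    simp only [vonMangoldt.residueClass, Set.indicator_apply, Set.mem_ofPred_eq]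
    rw [Finset.sum_ite_eq C (n : ZMod M) fun _ ↦ vonMangoldt n]
  obtain ⟨G, hG, hL⟩ := exists_continuousOn_LSeries_residueClass C hC
  have key := H (fun n ↦ ∑ a ∈ C, vonMangoldt.residueClass a n)
    (fun n ↦ Finset.sum_nonneg fun a _ ↦ vonMangoldt.residueClass_nonneg a n)
    (fun n ↦ by
      rw [hf]; split_ifs
      · exact le_rfl
      · exact vonMangoldt_nonneg) A hA0 hA1 G hG hL
  have key' := tendsto_natCast_atTop_atTop.eventually key
  have hlog := tendsto_natCast_atTop_atTop.eventually
    ((isLittleO_log_rpow_atTop (r := 1 / 2) (by norm_num)).bound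
      (by positivity : 0 < c * A ^ 2 / 4))
  filter_upwards [key', hlog, eventually_ge_atTop 2] with x h1 h2 hx
  have hx2 : (2 : ℝ) ≤ x := by exact_mod_cast hx
  have hl0 : 0 < Real.log x := Real.log_pos (by linarith)
  have h3 := Chebyshev.psi_sub_theta_le (x := x) (by linarith)
  rw [Nat.floor_natCast] at h1
  rw [Real.norm_of_nonneg hl0.le, Real.norm_of_nonneg (by positivity),
    ← Real.sqrt_eq_rpow] at h2
  have h4 : 2 * √(x : ℝ) * Real.log x ≤ c * A ^ 2 / 2 * x := by
    calc 2 * √(x : ℝ) * Real.log x ≤ 2 * √(x : ℝ) * (c * A ^ 2 / 4 * √(x : ℝ)) := by gcongr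
      _ = c * A ^ 2 / 2 * (√(x : ℝ) * √(x : ℝ)) := by ring
      _ = _ := by rw [Real.mul_self_sqrt (by positivity)]
  set S := (Finset.range (x + 1)).filter fun p : ℕ ↦ p.Prime ∧ (p : ZMod M) ∈ C with hS
  -- Split the weighted count according to whether `n` is prime.
  have h5 : ∑ n ∈ Finset.range (x + 1), ∑ a ∈ C, vonMangoldt.residueClass a n ≤
      S.card * Real.log x + (Chebyshev.psi x - Chebyshev.theta x) := by
    have e1 : Chebyshev.psi x = ∑ n ∈ Finset.range (x + 1), vonMangoldt n := by
      rw [Chebyshev.psi_eq_sum_Icc, Nat.floor_natCast, Finset.range_eq_Ico]; rfl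
    have e2 : Chebyshev.theta x =
        ∑ n ∈ Finset.range (x + 1), if n.Prime then Real.log n else 0 := by
      rw [Chebyshev.theta_eq_sum_Icc, Nat.floor_natCast, Finset.range_eq_Ico, Finset.sum_filter]
      rfl
    have e3 : (S.card : ℝ) * Real.log x =
        ∑ n ∈ Finset.range (x + 1),
          if n.Prime ∧ (n : ZMod M) ∈ C then Real.log x else 0 := by
      rw [← Finset.sum_filter, Finset.sum_const, nsmul_eq_mul]
    rw [e1, e2, e3, ← Finset.sum_sub_distrib, ← Finset.sum_add_distrib]
    refine Finset.sum_le_sum fun n hn ↦ ?_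
    rw [hf]
    have hΛ := vonMangoldt_nonneg (n := n)
    by_cases hp : n.Prime
    · have hnl : Real.log n ≤ Real.log x := by
        refine Real.log_le_log (by exact_mod_cast hp.pos) ?_
        exact_mod_cast Nat.lt_succ_iff.mp (Finset.mem_range.mp hn)
      by_cases hnC : (n : ZMod M) ∈ C <;> simp [hp, hnC, vonMangoldt_apply_prime, hnl]
    · by_cases hnC : (n : ZMod M) ∈ C <;> simp [hp, hnC, hΛ]
  rw [← mul_div_assoc, div_le_iff₀ hl0]
  nlinarith

/-! ### The density of rough residue classes -/

/-- The number of residues `a` modulo `n` for which both `a` and `a - 1` are invertible. -/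
noncomputable def unitPairCount (n : ℕ) : ℕ :=
  Nat.card {a : ZMod n // IsUnit a ∧ IsUnit (a - 1)}

lemma unitPairCount_mul {m n : ℕ} (h : m.Coprime n) :
    unitPairCount (m * n) = unitPairCount m * unitPairCount n := by
  rw [unitPairCount, unitPairCount, unitPairCount, ← Nat.card_prod]
  refine Nat.card_congr (Equiv.trans (Equiv.subtypeEquiv (ZMod.chineseRemainder h).toEquiv
    (q := fun x ↦ (IsUnit x.1 ∧ IsUnit (x.1 - 1)) ∧ (IsUnit x.2 ∧ IsUnit (x.2 - 1)))
    fun a ↦ ?_) (Equiv.subtypeProdEquivProd (p := fun a : ZMod m ↦ IsUnit a ∧ IsUnit (a - 1))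
      (q := fun a : ZMod n ↦ IsUnit a ∧ IsUnit (a - 1))))
  have h1 := MulEquiv.isUnit_map (ZMod.chineseRemainder h) (x := a)
  have h2 := MulEquiv.isUnit_map (ZMod.chineseRemainder h) (x := a - 1)
  rw [Prod.isUnit_iff] at h1 h2
  rw [map_sub, map_one, Prod.fst_sub, Prod.snd_sub, Prod.fst_one, Prod.snd_one] at h2
  rw [← h1, ← h2]
  exact and_and_and_comm

lemma unitPairCount_prime {q : ℕ} (hq : q.Prime) : unitPairCount q = q - 2 := by
  have := Fact.mk hq
  classical
  rw [unitPairCount, Nat.card_eq_fintype_card, Fintype.card_subtype]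
  have : (Finset.univ.filter fun a : ZMod q ↦ IsUnit a ∧ IsUnit (a - 1)) =
      Finset.univ \ {0, 1} := by
    ext a
    simp [isUnit_iff_ne_zero, sub_eq_zero]
  rw [this, Finset.card_sdiff_of_subset (Finset.subset_univ _), Finset.card_univ, ZMod.card,
    Finset.card_pair zero_ne_one]

/-- The local factor at `n` of the density of rough primes: `(n - 2) / (n - 1)` for an odd prime,
and `1` otherwise. -/
noncomputable def localFactor (n : ℕ) : ℝ :=
  if n.Prime ∧ n ≠ 2 then ((n : ℝ) - 2) / (n - 1) else 1

/-- The product of the odd primes below `y`. -/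
def oddPrimorial (y : ℕ) : ℕ :=
  ∏ q ∈ (Finset.range y).filter (fun q ↦ q.Prime ∧ q ≠ 2), q

lemma oddPrimorial_ne_zero (y : ℕ) : oddPrimorial y ≠ 0 :=
  Finset.prod_ne_zero_iff.mpr fun _ hq ↦ (Finset.mem_filter.mp hq).2.1.ne_zero

lemma unitPairCount_div_totient (y : ℕ) :
    (unitPairCount (oddPrimorial y) : ℝ) / (oddPrimorial y).totient =
      ∏ n ∈ Finset.range y, localFactor n := by
  induction y with
  | zero =>
    have : unitPairCount 1 = 1 := by
      rw [unitPairCount, Nat.card_eq_one_iff_unique]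
      exact ⟨inferInstance, ⟨0, isUnit_of_subsingleton _, isUnit_of_subsingleton _⟩⟩
    simp [oddPrimorial, this]
  | succ y ih =>
    rw [Finset.prod_range_succ, ← ih, oddPrimorial, Finset.range_add_one, Finset.filter_insert,
      localFactor]
    split_ifs with h
    · rw [Finset.prod_insert (by simp)]
      change ((unitPairCount (y * oddPrimorial y) : ℕ) : ℝ) / (y * oddPrimorial y).totient = _
      have hcop : y.Coprime (oddPrimorial y) := by
        refine Nat.Coprime.prod_right fun q hq ↦ ?_
        obtain ⟨h1, h2, -⟩ := Finset.mem_filter.mp hq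
        exact (Nat.coprime_primes h.1 h2).mpr (Finset.mem_range.mp h1).ne'
      rw [unitPairCount_mul hcop, Nat.totient_mul hcop, unitPairCount_prime h.1,
        Nat.totient_prime h.1, Nat.cast_mul, Nat.cast_mul, Nat.cast_sub h.1.two_le,
        Nat.cast_sub h.1.one_le]
      push_cast
      rw [mul_comm, mul_comm (_ - 1 : ℝ), mul_div_mul_comm]
    · rw [mul_one]; rfl

lemma localFactor_of_not_prime {n : ℕ} (h : ¬ n.Prime ∨ n = 2) : localFactor n = 1 := by
  rw [localFactor, if_neg (by tauto)]

lemma le_localFactor {n : ℕ} (hn : 2 ≤ n) : ((n : ℝ) - 2) / (n - 1) ≤ localFactor n := by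
  have : (2 : ℝ) ≤ n := by exact_mod_cast hn
  rw [localFactor]
  split_ifs
  · exact le_rfl
  · rw [div_le_one (by linarith)]; linarith

/-- A lower bound of order `y ^ (-1/3)` for the density of `y`-rough primes. Among six consecutive
integers only two can be prime, which is what gains over the trivial exponent `-1`. -/
lemma prod_localFactor_lower (k : ℕ) (hk : 1 ≤ k) :
    0 < ∏ n ∈ Finset.range (6 * k + 2), localFactor n ∧
      3 / 100 / (k : ℝ) ≤ (∏ n ∈ Finset.range (6 * k + 2), localFactor n) ^ 3 := by
  induction k, hk using Nat.le_induction with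
  | base =>
    have : ∏ n ∈ Finset.range (6 * 1 + 2), localFactor n = 5 / 16 := by
      simp only [localFactor, Finset.prod_range_succ, Finset.prod_range_zero]
      norm_num
    rw [this]; norm_num
  | succ k hk ih =>
    obtain ⟨ih0, ih⟩ := ih
    have e : ∏ n ∈ Finset.range (6 * (k + 1) + 2), localFactor n =
        (∏ n ∈ Finset.range (6 * k + 2), localFactor n) *
          (localFactor (6 * k + 5) * localFactor (6 * k + 7)) := by
      rw [show 6 * (k + 1) + 2 = 6 * k + 2 + 1 + 1 + 1 + 1 + 1 + 1 by ring]
      simp only [Finset.prod_range_succ]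
      have h2 : localFactor (6 * k + 2) = 1 := localFactor_of_not_prime <| by
        left; intro h
        have := (Nat.prime_dvd_prime_iff_eq Nat.prime_two h).mp (by omega)
        omega
      have h3 : localFactor (6 * k + 2 + 1) = 1 := localFactor_of_not_prime <| by
        left; intro h
        have := (Nat.prime_dvd_prime_iff_eq Nat.prime_three h).mp (by omega)
        omega
      have h4 : localFactor (6 * k + 2 + 1 + 1) = 1 := localFactor_of_not_prime <| by
        left; intro h
        have := (Nat.prime_dvd_prime_iff_eq Nat.prime_two h).mp (by omega)
        omega
      have h6 : localFactor (6 * k + 2 + 1 + 1 + 1 + 1) = 1 := localFactor_of_not_prime <| by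
        left; intro h
        have := (Nat.prime_dvd_prime_iff_eq Nat.prime_two h).mp (by omega)
        omega
      rw [h2, h3, h4, h6]
      ring_nf
    have hk' : (1 : ℝ) ≤ k := by exact_mod_cast hk
    have h5 := le_localFactor (n := 6 * k + 5) (by omega)
    have h7 := le_localFactor (n := 6 * k + 7) (by omega)
    push_cast at h5 h7
    rw [show (6 * (k : ℝ) + 5 - 2) = 6 * k + 3 by ring,
      show (6 * (k : ℝ) + 5 - 1) = 6 * k + 4 by ring] at h5
    rw [show (6 * (k : ℝ) + 7 - 2) = 6 * k + 5 by ring,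
      show (6 * (k : ℝ) + 7 - 1) = 6 * k + 6 by ring] at h7
    have h57 : (6 * (k : ℝ) + 3) / (6 * k + 4) * ((6 * k + 5) / (6 * k + 6)) ≤
        localFactor (6 * k + 5) * localFactor (6 * k + 7) := by
      have : 0 < (6 * (k : ℝ) + 3) / (6 * k + 4) := by positivity
      gcongr
      exact this.le.trans h5
    have hpos : 0 < (6 * (k : ℝ) + 3) / (6 * k + 4) * ((6 * k + 5) / (6 * k + 6)) := by
      positivity
    rw [e]
    refine ⟨mul_pos ih0 (hpos.trans_le h57), ?_⟩
    rw [mul_pow]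
    calc 3 / 100 / ((k + 1 : ℕ) : ℝ) ≤ 3 / 100 / (k : ℝ) *
          ((6 * (k : ℝ) + 3) / (6 * k + 4) * ((6 * k + 5) / (6 * k + 6))) ^ 3 := by
          push_cast
          rw [div_mul_div_comm, div_pow, div_mul_div_comm,
            div_le_div_iff₀ (by positivity) (by positivity)]
          have h : (k : ℝ) * ((6 * (k : ℝ) + 4) * (6 * k + 6)) ^ 3 ≤
              (k + 1) * ((6 * k + 3) * (6 * k + 5)) ^ 3 := by
            have hk0 : (0 : ℝ) ≤ k := by positivity
            rw [← sub_nonneg]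
            ring_nf
            positivity
          nlinarith
      _ ≤ _ := by gcongr

/-! ### Lower bound for rough primes -/

lemma isRough_of_isUnit {y p : ℕ} (hp : p.Prime)
    (h : IsUnit ((p : ZMod (oddPrimorial y)) - 1)) : IsRough y p := by
  intro q hq hqp hq2
  by_contra! hlt
  have hlt' : q < y := by exact_mod_cast hlt
  rw [← Nat.cast_one, ← Nat.cast_sub hp.one_le, ZMod.isUnit_iff_coprime] at h
  have hd : q ∣ oddPrimorial y := Finset.dvd_prod_of_mem (fun q ↦ q)
    (Finset.mem_filter.mpr ⟨Finset.mem_range.mpr hlt', hq, hq2⟩)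
  exact Nat.not_coprime_of_dvd_of_dvd hq.one_lt hqp hd h

lemma finite_setOf_le_and (x : ℕ) (P : ℕ → Prop) : {p : ℕ | p ≤ x ∧ P p}.Finite :=
  (Set.finite_Iic x).subset fun _ hp ↦ hp.1

open Filter in
/-- There are at least `≫ y ^ (-2/3) * x / log x` primes up to `x` that are `y`-rough,
with `y = 6 * k + 2`, an absolute implied constant, and `x` large in terms of `y`. -/
lemma exists_rough_count_lower_bound : ∃ c : ℝ, 0 < c ∧ ∀ k : ℕ, 1 ≤ k → ∀ᶠ x : ℕ in atTop,
    c * (k : ℝ) ^ (-(2 / 3) : ℝ) * (x / Real.log x) ≤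
      {p : ℕ | p ≤ x ∧ p.Prime ∧ IsRough ((6 * k + 2 : ℕ) : ℝ) p}.ncard := by
  classical
  obtain ⟨c, hc, H⟩ := exists_prime_count_lower_bound
  refine ⟨c * (3 / 100 : ℝ) ^ (2 / 3 : ℝ), by positivity, fun k hk ↦ ?_⟩
  set M := oddPrimorial (6 * k + 2) with hM
  have : NeZero M := ⟨oddPrimorial_ne_zero _⟩
  obtain ⟨hP0, hP⟩ := prod_localFactor_lower k hk
  rw [← unitPairCount_div_totient, ← hM] at hP0 hP
  set A : ℝ := (unitPairCount M : ℝ) / M.totient with hA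
  set C : Finset (ZMod M) := Finset.univ.filter fun a ↦ IsUnit a ∧ IsUnit (a - 1) with hC
  have hCcard : C.card = unitPairCount M := by
    rw [unitPairCount, Nat.card_eq_fintype_card, Fintype.card_subtype]
  have hCne : C.Nonempty := by
    rw [← Finset.card_pos, hCcard]
    by_contra! h0
    rw [hA, Nat.le_zero.mp h0] at hP0
    simp at hP0
  have hk0 : (0 : ℝ) < k := by exact_mod_cast hk
  have hA2 : (3 / 100 : ℝ) ^ (2 / 3 : ℝ) * (k : ℝ) ^ (-(2 / 3) : ℝ) ≤ A ^ 2 := by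
    calc (3 / 100 : ℝ) ^ (2 / 3 : ℝ) * (k : ℝ) ^ (-(2 / 3) : ℝ)
        = (3 / 100 / (k : ℝ)) ^ (2 / 3 : ℝ) := by
          rw [Real.div_rpow (by norm_num) hk0.le, Real.rpow_neg hk0.le, div_eq_mul_inv _ (_ ^ _)]
      _ ≤ (A ^ 3) ^ (2 / 3 : ℝ) := by gcongr
      _ = A ^ 2 := by
          rw [← Real.rpow_natCast, ← Real.rpow_mul hP0.le, ← Real.rpow_natCast]
          norm_num
  filter_upwards [H M C hCne fun a ha ↦ (Finset.mem_filter.mp ha).2.1,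
    eventually_ge_atTop 2] with x hx hx2
  rw [hCcard, ← hA] at hx
  have hl : 0 ≤ (x : ℝ) / Real.log x := by
    have := Real.log_nonneg (x := x) (by exact_mod_cast (by omega : 1 ≤ x))
    positivity
  refine le_trans ?_ (hx.trans ?_)
  · rw [mul_assoc c]; gcongr
  · rw [← Set.ncard_coe_finset]
    refine Nat.cast_le.mpr (Set.ncard_le_ncard (fun p hp ↦ ?_) (finite_setOf_le_and x _))
    obtain ⟨h1, h2, h3⟩ := Finset.mem_filter.mp (Finset.mem_coe.mp hp)
    exact ⟨Nat.lt_succ_iff.mp (Finset.mem_range.mp h1), h2,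
      isRough_of_isUnit h2 (Finset.mem_filter.mp h3).2.2⟩

/-! ### Chebyshev-type bound for primes congruent to one -/

open Nat in
/-- A divisibility behind the Chebyshev-type upper bound for primes `≡ 1 (mod q)`: up to a power
of `q`, the product of `q * m + 1` behaves like a rising factorial. -/
lemma factorial_dvd_pow_mul_prod {q : ℕ} (hq : q.Prime) (N : ℕ) :
    N ! ∣ q ^ N * ∏ m ∈ Finset.range N, (q * (m + 1) + 1) := by
  rw [← Nat.ordProj_mul_ordCompl_eq_self N ! q]
  refine mul_dvd_mul (pow_dvd_pow q ?_) ?_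
  · exact (Nat.factorization_factorial_le_div_pred hq N).trans (Nat.div_le_self _ _)
  · set L := N ! / q ^ (N !).factorization q with hL
    have hcop : q.Coprime L := Nat.coprime_ordCompl hq (Nat.factorial_ne_zero N)
    have hL0 : L ≠ 0 := (Nat.ordCompl_pos q (Nat.factorial_ne_zero N)).ne'
    have : NeZero L := ⟨hL0⟩
    set r : ℕ := ((q : ZMod L)⁻¹).val with hr
    have hqr : (q : ZMod L) * (r : ZMod L) = 1 := by
      rw [hr, ZMod.natCast_zmod_val, ZMod.coe_mul_inv_eq_one q hcop]
    have h1 : L ∣ (r + 1).ascFactorial N :=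
      (Nat.ordCompl_dvd _ _).trans (Nat.factorial_dvd_ascFactorial _ _)
    rw [Nat.ascFactorial_eq_prod_range, ← ZMod.natCast_eq_zero_iff] at h1
    rw [← ZMod.natCast_eq_zero_iff]
    -- Modulo `L` one has `q * m + 1 = q * (m + r)`, because `r` is inverse to `q`.
    calc ((∏ m ∈ Finset.range N, (q * (m + 1) + 1) : ℕ) : ZMod L)
        = ∏ m ∈ Finset.range N, (q : ZMod L) * ((r + 1 + m : ℕ) : ZMod L) := by
          push_cast
          refine Finset.prod_congr rfl fun m _ ↦ ?_
          rw [← hqr]; ring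
      _ = 0 := by
          rw [Finset.prod_mul_distrib, ← Nat.cast_prod (fun m ↦ r + 1 + m), h1, mul_zero]

open Nat in
/-- The primes `p ≡ 1 (mod q)` with `N < p ≤ q * N + 1` have product at most `q ^ (3 * N)`: they
divide the product in `factorial_dvd_pow_mul_prod` but are coprime to `N !`. -/
lemma prod_primes_le {q : ℕ} (hq : q.Prime) (N : ℕ) (S : Finset ℕ)
    (hS : ∀ p ∈ S, p.Prime ∧ N < p ∧ ∃ m < N, p = q * (m + 1) + 1) :
    ∏ p ∈ S, p ≤ q ^ (3 * N) := by
  have hdvd : ∏ p ∈ S, p ∣ q ^ N * ∏ m ∈ Finset.range N, (q * (m + 1) + 1) := by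
    refine (Finset.prod_primes_dvd _ (fun p hp ↦ (hS p hp).1.prime) fun p hp ↦ ?_).mul_left _
    obtain ⟨-, -, m, hm, rfl⟩ := hS p hp
    exact Finset.dvd_prod_of_mem (fun m ↦ q * (m + 1) + 1) (Finset.mem_range.mpr hm)
  have hcop : (N !).Coprime (∏ p ∈ S, p) := by
    refine Nat.Coprime.prod_right fun p hp ↦ ?_
    exact ((hS p hp).1.coprime_factorial_of_lt (hS p hp).2.1).symm
  have h1 := hcop.mul_dvd_of_dvd_of_dvd (factorial_dvd_pow_mul_prod hq N) hdvd
  have h2 := Nat.le_of_dvd (by have := hq.pos; positivity) h1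
  have h3 : ∏ m ∈ Finset.range N, (q * (m + 1) + 1) ≤ q ^ N * (N + 1)! := by
    calc ∏ m ∈ Finset.range N, (q * (m + 1) + 1) ≤ ∏ m ∈ Finset.range N, q * (m + 1 + 1) :=
          Finset.prod_le_prod' fun m _ ↦ by have := hq.one_le; nlinarith
      _ = q ^ N * (N + 1)! := by
          rw [Finset.prod_mul_distrib, Finset.prod_const, Finset.card_range,
            ← Finset.prod_range_add_one_eq_factorial (N + 1), Finset.prod_range_succ']
          simp
  have h4 : N + 1 ≤ q ^ N := (Nat.lt_two_pow_self (n := N)).trans_le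
    (Nat.pow_le_pow_left hq.two_le N)
  refine Nat.le_of_mul_le_mul_left (c := N !) ?_ (Nat.factorial_pos N)
  calc N ! * ∏ p ∈ S, p ≤ q ^ N * (q ^ N * (N + 1)!) := h2.trans (by gcongr)
    _ = N ! * (q ^ N * q ^ N * (N + 1)) := by rw [Nat.factorial_succ]; ring
    _ ≤ N ! * (q ^ N * q ^ N * q ^ N) := by gcongr
    _ = _ := by ring

open Filter in
/-- A Chebyshev-type upper bound for primes `≡ 1 (mod q)`, losing a factor `log q`. -/
lemma eventually_card_prime_modEq_le : ∀ᶠ x : ℕ in atTop, ∀ q : ℕ, q.Prime → q ≠ 2 → q ^ 4 ≤ x →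
    (((Finset.range (x + 1)).filter fun p ↦ p.Prime ∧ q ∣ p - 1).card : ℝ) ≤
      10 * (x / q) * Real.log q / Real.log x := by
  have hpi := tendsto_natCast_atTop_atTop.eventually
    (Chebyshev.eventually_primeCounting_le (ε := 1 / 2) (by norm_num))
  obtain ⟨N₀, hN₀⟩ := eventually_atTop.mp hpi
  filter_upwards [eventually_ge_atTop (N₀ ^ 2 + 4)] with x hx q hq hq2 hqx
  have hq3 : 3 ≤ q := by have := hq.two_le; omega
  set N := x / q with hN
  have hNq : q ^ 3 ≤ N := by
    rw [hN, Nat.le_div_iff_mul_le hq.pos]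
    exact le_of_eq_of_le (by ring) hqx
  have hxN : x ≤ N ^ 2 := by
    have h1 : x < q * (N + 1) := Nat.lt_mul_div_succ x hq.pos
    have h2 : q * 9 ≤ N := le_trans (by nlinarith [mul_le_mul' hq3 hq3]) hNq
    nlinarith
  have hNN : N₀ ≤ N := by
    by_contra! h
    have := Nat.pow_le_pow_left h.le 2
    omega
  have hN2 : 2 ≤ N := by by_contra! h; nlinarith
  have hN1 : (1 : ℝ) < N := by exact_mod_cast hN2
  have hlN : 0 < Real.log N := Real.log_pos hN1
  have hx1 : (1 : ℝ) < x := by exact_mod_cast (by nlinarith : 1 < x)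
  have hlx : 0 < Real.log x := Real.log_pos hx1
  have hlog : Real.log x ≤ 2 * Real.log N := by
    have : Real.log x ≤ Real.log ((N : ℝ) ^ 2) :=
      Real.log_le_log (by linarith) (by exact_mod_cast hxN)
    rwa [Real.log_pow] at this
  have hlq : 1 ≤ Real.log q := by
    rw [Real.le_log_iff_exp_le (by exact_mod_cast hq.pos)]
    exact Real.exp_one_lt_three.le.trans (by exact_mod_cast hq3)
  set S := (Finset.range (x + 1)).filter fun p ↦ p.Prime ∧ q ∣ p - 1 with hS
  have hsmall : ((S.filter (· ≤ N)).card : ℝ) ≤ 2 * N / Real.log N := by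
    have h1 : (S.filter (· ≤ N)).card ≤ Nat.primeCounting N := by
      rw [Nat.primeCounting, Nat.primeCounting', Nat.count_eq_card_filter_range]
      refine Finset.card_le_card fun p hp ↦ ?_
      simp only [hS, Finset.mem_filter, Finset.mem_range] at hp ⊢
      exact ⟨by omega, hp.1.2.1⟩
    have h2 := hN₀ N hNN
    rw [Nat.floor_natCast] at h2
    refine (Nat.cast_le.mpr h1).trans (h2.trans ?_)
    have : Real.log 4 + 1 / 2 ≤ 2 := by
      rw [show (4 : ℝ) = 2 ^ 2 by norm_num, Real.log_pow]
      have := Real.log_two_lt_d9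
      push_cast
      linarith
    gcongr
  have hlarge : ((S.filter (¬ · ≤ N)).card : ℝ) ≤ 3 * N * Real.log q / Real.log N := by
    have h1 := prod_primes_le hq N (S.filter (¬ · ≤ N)) fun p hp ↦ by
      simp only [hS, Finset.mem_filter, Finset.mem_range, not_le] at hp
      obtain ⟨⟨hpx, hpp, m, hm⟩, hpN⟩ := hp
      have hp2 := hpp.two_le
      have hm0 : m ≠ 0 := by rintro rfl; omega
      refine ⟨hpp, hpN, m - 1, ?_, ?_⟩
      · have : m ≤ N := by
          rw [hN, Nat.le_div_iff_mul_le hq.pos, mul_comm]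
          omega
        omega
      · rw [Nat.sub_add_cancel (Nat.pos_of_ne_zero hm0)]
        omega
    have h2 : N ^ (S.filter (¬ · ≤ N)).card ≤ q ^ (3 * N) := by
      refine le_trans ?_ h1
      refine Finset.pow_card_le_prod _ _ _ fun p hp ↦ ?_
      exact (not_le.mp (Finset.mem_filter.mp hp).2).le
    have h3 : Real.log ((N : ℝ) ^ (S.filter (¬ · ≤ N)).card) ≤ Real.log ((q : ℝ) ^ (3 * N)) :=
      Real.log_le_log (by positivity) (by exact_mod_cast h2)
    rw [Real.log_pow, Real.log_pow] at h3
    rw [le_div_iff₀ hlN]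
    push_cast at h3
    exact h3
  have hNx : (N : ℝ) ≤ x / q := Nat.cast_div_le
  have hcard : (S.card : ℝ) = (S.filter (· ≤ N)).card + (S.filter (¬ · ≤ N)).card := by
    exact_mod_cast (Finset.card_filter_add_card_filter_not (s := S) (· ≤ N)).symm
  rw [hcard]
  calc _ ≤ 2 * N / Real.log N + 3 * N * Real.log q / Real.log N := add_le_add hsmall hlarge
    _ = N * (2 * 1 + 3 * Real.log q) / Real.log N := by ring
    _ ≤ N * (2 * Real.log q + 3 * Real.log q) / (Real.log x / 2) := by
        gcongr; linarith
    _ = 10 * N * Real.log q / Real.log x := by field_simp; ring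
    _ ≤ _ := by gcongr

/-! ### Exceptional primes and the conclusion -/

lemma card_prime_modEq_le_trivial (x q : ℕ) :
    (((Finset.range (x + 1)).filter fun p ↦ p.Prime ∧ q ∣ p - 1).card : ℝ) ≤ x / q := by
  refine le_trans ?_ (Nat.cast_div_le (m := x) (n := q))
  rw [← Nat.Ioc_filter_dvd_card_eq_div, Nat.cast_le]
  refine Finset.card_le_card_of_injOn (fun p ↦ p - 1) (fun p hp ↦ ?_) fun a ha b hb hab ↦ ?_
  · simp only [Finset.coe_filter, Set.mem_ofPred_eq, Finset.mem_range, Finset.mem_Ioc] at hp ⊢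
    have := hp.2.1.two_le
    exact ⟨by omega, hp.2.2⟩
  · simp only [Finset.coe_filter, Set.mem_ofPred_eq, Finset.mem_range] at ha hb hab
    have := ha.2.1.two_le
    have := hb.2.1.two_le
    omega

/-- Markov's inequality together with an interchange of summation. -/
lemma bad_count_le (x y : ℕ) :
    ({p : ℕ | p ≤ x ∧ p.Prime ∧ IsRough y p ∧ 1 / 2 ≤ oddRecipSum (p - 1)}.ncard : ℝ) ≤
      2 * ∑ q ∈ (Finset.range (x + 1)).filter (fun q ↦ q.Prime ∧ q ≠ 2 ∧ y ≤ q),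
        (1 : ℝ) / q * ((Finset.range (x + 1)).filter fun p ↦ p.Prime ∧ q ∣ p - 1).card := by
  classical
  set B := (Finset.range (x + 1)).filter
    fun p ↦ p.Prime ∧ IsRough y p ∧ 1 / 2 ≤ oddRecipSum (p - 1) with hB
  set Q := (Finset.range (x + 1)).filter (fun q ↦ q.Prime ∧ q ≠ 2 ∧ y ≤ q) with hQ
  have h1 : {p : ℕ | p ≤ x ∧ p.Prime ∧ IsRough y p ∧ 1 / 2 ≤ oddRecipSum (p - 1)} = B := by
    ext p
    simp [hB]
  have h2 : (B.card : ℝ) ≤ 2 * ∑ p ∈ B, oddRecipSum (p - 1) := by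
    rw [Finset.mul_sum, ← nsmul_one, ← Finset.sum_const]
    refine Finset.sum_le_sum fun p hp ↦ ?_
    have := (Finset.mem_filter.mp hp).2.2.2
    linarith
  have h3 : ∀ p ∈ B, oddRecipSum (p - 1) ≤ ∑ q ∈ Q, if q ∣ p - 1 then (1 : ℝ) / q else 0 := by
    intro p hp
    obtain ⟨hpx, hpp, hpr, -⟩ := Finset.mem_filter.mp hp
    rw [← Finset.sum_filter, oddRecipSum]
    refine Finset.sum_le_sum_of_subset_of_nonneg (fun q hq ↦ ?_) fun _ _ _ ↦ by positivity
    simp only [Finset.mem_filter, Nat.mem_primeFactors, hQ, Finset.mem_range] at hq hpx ⊢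
    have := Nat.le_of_dvd (Nat.pos_of_ne_zero hq.1.2.2) hq.1.2.1
    exact ⟨⟨by omega, hq.1.1, hq.2, by exact_mod_cast hpr q hq.1.1 hq.1.2.1 hq.2⟩, hq.1.2.1⟩
  rw [h1, Set.ncard_coe_finset]
  refine h2.trans (mul_le_mul_of_nonneg_left ((Finset.sum_le_sum h3).trans ?_) (by norm_num))
  rw [Finset.sum_comm]
  refine Finset.sum_le_sum fun q _ ↦ ?_
  rw [← Finset.sum_filter, Finset.sum_const, nsmul_eq_mul, mul_comm]
  gcongr
  intro p hp
  simp only [hB, Finset.mem_filter] at hp ⊢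
  exact ⟨hp.1.1, hp.1.2.1, hp.2⟩

open Filter in
/-- The rough primes `p` with `∑ 1 / q ≥ 1 / 2` over odd prime factors `q` of `p - 1` number
`O(y ^ (-7/10) * x / log x)`. The exponent only needs to beat the `-2/3` of
`exists_rough_count_lower_bound`. -/
lemma exists_bad_count_bound : ∃ K : ℝ, 0 < K ∧ ∀ k : ℕ, 1 ≤ k → ∀ η : ℝ, 0 < η →
    ∀ᶠ x : ℕ in atTop,
      ({p : ℕ | p ≤ x ∧ p.Prime ∧ IsRough ((6 * k + 2 : ℕ) : ℝ) p ∧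
        1 / 2 ≤ oddRecipSum (p - 1)}.ncard : ℝ) ≤
      (K * (k : ℝ) ^ (-(7 / 10) : ℝ) + η) * (x / Real.log x) := by
  have hsum : Summable fun n : ℕ ↦ (n : ℝ) ^ (-(21 / 20) : ℝ) :=
    Real.summable_nat_rpow.mpr (by norm_num)
  set S : ℝ := ∑' n : ℕ, (n : ℝ) ^ (-(21 / 20) : ℝ) with hS
  have hS0 : 0 ≤ S := tsum_nonneg fun n ↦ by positivity
  refine ⟨80 * S + 1, by positivity, fun k hk η hη ↦ ?_⟩
  have hk0 : (0 : ℝ) < k := by exact_mod_cast hk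
  have hlog := tendsto_natCast_atTop_atTop.eventually
    ((isLittleO_log_rpow_atTop (r := 1 / 5) (by norm_num)).bound
      (by positivity : 0 < η / (2 * S + 1)))
  filter_upwards [eventually_card_prime_modEq_le, eventually_ge_atTop 2, hlog] with x hcheb hx hl
  have hx2 : (2 : ℝ) ≤ x := by exact_mod_cast hx
  have hx0 : (0 : ℝ) < x := by linarith
  have hlx : 0 < Real.log x := Real.log_pos (by linarith)
  rw [Real.norm_of_nonneg hlx.le, Real.norm_of_nonneg (by positivity)] at hl
  set Q := (Finset.range (x + 1)).filter (fun q ↦ q.Prime ∧ q ≠ 2 ∧ 6 * k + 2 ≤ q) with hQ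
  set W : ℝ := 40 * (k : ℝ) ^ (-(7 / 10) : ℝ) * (x / Real.log x) + x * (x : ℝ) ^ (-(1 / 5) : ℝ)
    with hW
  have hterm : ∀ q ∈ Q,
      (1 : ℝ) / q * ((Finset.range (x + 1)).filter fun p ↦ p.Prime ∧ q ∣ p - 1).card ≤
        W * (q : ℝ) ^ (-(21 / 20) : ℝ) := by
    intro q hq
    obtain ⟨-, hqp, hq2, hqk⟩ := Finset.mem_filter.mp hq
    have hq0 : (0 : ℝ) < q := by exact_mod_cast hqp.pos
    have hkq : (k : ℝ) ≤ q := by exact_mod_cast (by omega : k ≤ q)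
    by_cases hqx : q ^ 4 ≤ x
    · have h1 := hcheb q hqp hq2 hqx
      have h2 : Real.log q ≤ 4 * (q : ℝ) ^ (1 / 4 : ℝ) := by
        have := Real.log_le_rpow_div hq0.le (ε := 1 / 4) (by norm_num)
        linarith
      have h3 : (1 : ℝ) / q * (1 / q) * (q : ℝ) ^ (1 / 4 : ℝ) =
          (q : ℝ) ^ (-(7 / 10) : ℝ) * (q : ℝ) ^ (-(21 / 20) : ℝ) := by
        rw [one_div, ← Real.rpow_neg_one, ← Real.rpow_add hq0, ← Real.rpow_add hq0,
          ← Real.rpow_add hq0]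
        norm_num
      calc (1 : ℝ) / q * ((Finset.range (x + 1)).filter fun p ↦ p.Prime ∧ q ∣ p - 1).card
          ≤ 1 / q * (10 * (x / q) * (4 * (q : ℝ) ^ (1 / 4 : ℝ)) / Real.log x) := by
            gcongr
            exact h1.trans (by gcongr)
        _ = 40 * (1 / q * (1 / q) * (q : ℝ) ^ (1 / 4 : ℝ)) * (x / Real.log x) := by ring
        _ = 40 * (q : ℝ) ^ (-(7 / 10) : ℝ) * (x / Real.log x) * (q : ℝ) ^ (-(21 / 20) : ℝ) := by
            rw [h3]; ring
        _ ≤ 40 * (k : ℝ) ^ (-(7 / 10) : ℝ) * (x / Real.log x) * (q : ℝ) ^ (-(21 / 20) : ℝ) := by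
            have := Real.rpow_le_rpow_of_nonpos hk0 hkq (by norm_num : (-(7 / 10) : ℝ) ≤ 0)
            gcongr
        _ ≤ W * (q : ℝ) ^ (-(21 / 20) : ℝ) := by
            gcongr
            rw [hW]
            have : 0 ≤ x * (x : ℝ) ^ (-(1 / 5) : ℝ) := by positivity
            linarith
    · have hq1 : (1 : ℝ) ≤ q := by exact_mod_cast hqp.one_le
      have h3 : (1 : ℝ) / q * (1 / q) ≤ (x : ℝ) ^ (-(1 / 5) : ℝ) * (q : ℝ) ^ (-(21 / 20) : ℝ) := by
        calc (1 : ℝ) / q * (1 / q) = (q : ℝ) ^ (-(19 / 20) : ℝ) * (q : ℝ) ^ (-(21 / 20) : ℝ) := by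
              rw [one_div, ← Real.rpow_neg_one, ← Real.rpow_add hq0, ← Real.rpow_add hq0]
              norm_num
          _ ≤ (q : ℝ) ^ (-(4 / 5) : ℝ) * (q : ℝ) ^ (-(21 / 20) : ℝ) := by
              gcongr ?_ * _
              exact Real.rpow_le_rpow_of_exponent_le hq1 (by norm_num)
          _ = ((q : ℝ) ^ 4) ^ (-(1 / 5) : ℝ) * (q : ℝ) ^ (-(21 / 20) : ℝ) := by
              rw [← Real.rpow_natCast, ← Real.rpow_mul hq0.le]
              norm_num
          _ ≤ _ := by
              gcongr ?_ * _
              exact Real.rpow_le_rpow_of_nonpos hx0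
                (by exact_mod_cast (not_le.mp hqx).le) (by norm_num)
      calc (1 : ℝ) / q * ((Finset.range (x + 1)).filter fun p ↦ p.Prime ∧ q ∣ p - 1).card
          ≤ 1 / q * (x / q) := by
            gcongr
            exact card_prime_modEq_le_trivial x q
        _ = x * (1 / q * (1 / q)) := by ring
        _ ≤ x * ((x : ℝ) ^ (-(1 / 5) : ℝ) * (q : ℝ) ^ (-(21 / 20) : ℝ)) := by gcongr
        _ = x * (x : ℝ) ^ (-(1 / 5) : ℝ) * (q : ℝ) ^ (-(21 / 20) : ℝ) := by ring
        _ ≤ W * (q : ℝ) ^ (-(21 / 20) : ℝ) := by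
            gcongr
            rw [hW]
            have : 0 ≤ 40 * (k : ℝ) ^ (-(7 / 10) : ℝ) * (x / Real.log x) := by positivity
            linarith
  have hW0 : 0 ≤ W := by positivity
  have hxl : (x : ℝ) ^ (-(1 / 5) : ℝ) ≤ η / (2 * S + 1) / Real.log x := by
    rw [Real.rpow_neg hx0.le, le_div_iff₀ hlx, inv_mul_le_iff₀ (by positivity)]
    linarith
  calc _ ≤ 2 * ∑ q ∈ Q, (1 : ℝ) / q *
        ((Finset.range (x + 1)).filter fun p ↦ p.Prime ∧ q ∣ p - 1).card :=
        bad_count_le x (6 * k + 2)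
    _ ≤ 2 * ∑ q ∈ Q, W * (q : ℝ) ^ (-(21 / 20) : ℝ) := by
        exact mul_le_mul_of_nonneg_left (Finset.sum_le_sum hterm) (by norm_num)
    _ ≤ 2 * (W * S) := by
        rw [← Finset.mul_sum]
        gcongr
        exact hsum.sum_le_tsum _ fun n _ ↦ by positivity
    _ ≤ 2 * ((40 * (k : ℝ) ^ (-(7 / 10) : ℝ) * (x / Real.log x) +
          x * (η / (2 * S + 1) / Real.log x)) * S) := by rw [hW]; gcongr
    _ = (80 * S * (k : ℝ) ^ (-(7 / 10) : ℝ) + η * (2 * S / (2 * S + 1))) *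
          (x / Real.log x) := by ring
    _ ≤ _ := by
        have h1 : 2 * S / (2 * S + 1) ≤ 1 := by
          rw [div_le_one (by positivity)]; linarith
        have h2 : η * (2 * S / (2 * S + 1)) ≤ η := mul_le_of_le_one_right hη.le h1
        gcongr
        linarith

theorem stmt14 (δ : ℝ) (hδ : 0 < δ) :
    ∃ y : ℝ, 0 < y ∧ ∃ x₀ : ℕ, ∀ x : ℕ, x₀ ≤ x →
      (1 - δ) * ({p : ℕ | p ≤ x ∧ p.Prime ∧ IsRough y p}.ncard : ℝ) ≤
        ({p : ℕ | p ≤ x ∧ p.Prime ∧ IsRough y p ∧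
            ∀ d : ℕ, d ∣ p - 1 → 1 < d →
              (jacobsthal d : ℝ) ≤
                2 * ((d : ℝ) / (Nat.totient d : ℝ)) *
                  (d.primeFactors.card : ℝ)}.ncard : ℝ) := by
  obtain ⟨c, hc, hrough⟩ := exists_rough_count_lower_bound
  obtain ⟨K, hK, hbad⟩ := exists_bad_count_bound
  -- Since `7/10 > 2/3`, the exceptional primes are outnumbered once `y` is large.
  have hlim : Filter.Tendsto (fun k : ℕ ↦ K * (k : ℝ) ^ (-(1 / 30) : ℝ)) Filter.atTop
      (nhds 0) := by
    have := ((tendsto_rpow_neg_atTop (y := 1 / 30) (by norm_num)).comp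
      tendsto_natCast_atTop_atTop).const_mul K
    simpa using this
  obtain ⟨k, hk, hk1⟩ := ((hlim.eventually_le_const (by positivity : 0 < δ * c / 2)).and
    (Filter.eventually_ge_atTop 1)).exists
  have hk0 : (0 : ℝ) < k := by exact_mod_cast hk1
  set u : ℝ := c * (k : ℝ) ^ (-(2 / 3) : ℝ) with hu
  have hu0 : 0 < u := by positivity
  have hKu : K * (k : ℝ) ^ (-(7 / 10) : ℝ) ≤ δ / 2 * u := by
    calc K * (k : ℝ) ^ (-(7 / 10) : ℝ)
        = K * (k : ℝ) ^ (-(1 / 30) : ℝ) * (k : ℝ) ^ (-(2 / 3) : ℝ) := by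
          rw [mul_assoc, ← Real.rpow_add hk0]; norm_num
      _ ≤ δ * c / 2 * (k : ℝ) ^ (-(2 / 3) : ℝ) := by gcongr
      _ = δ / 2 * u := by rw [hu]; ring
  obtain ⟨x₀, hx₀⟩ := Filter.eventually_atTop.mp
    ((hrough k hk1).and (hbad k hk1 (δ / 2 * u) (by positivity)))
  refine ⟨((6 * k + 2 : ℕ) : ℝ), by positivity, x₀, fun x hx ↦ ?_⟩
  obtain ⟨h1, h2⟩ := hx₀ x hx
  set y : ℝ := ((6 * k + 2 : ℕ) : ℝ) with hy
  have hl : 0 ≤ (x : ℝ) / Real.log x := div_nonneg (by positivity) (Real.log_natCast_nonneg x)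
  have h3 : {p : ℕ | p ≤ x ∧ p.Prime ∧ IsRough y p} ⊆
      {p : ℕ | p ≤ x ∧ p.Prime ∧ IsRough y p ∧ ∀ d : ℕ, d ∣ p - 1 → 1 < d →
        (jacobsthal d : ℝ) ≤ 2 * ((d : ℝ) / (Nat.totient d : ℝ)) * (d.primeFactors.card : ℝ)} ∪
      {p : ℕ | p ≤ x ∧ p.Prime ∧ IsRough y p ∧ 1 / 2 ≤ oddRecipSum (p - 1)} := by
    rintro p ⟨hpx, hpp, hpr⟩
    by_cases hp : 1 / 2 ≤ oddRecipSum (p - 1)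
    · exact Or.inr ⟨hpx, hpp, hpr, hp⟩
    · have hp0 : p - 1 ≠ 0 := by have := hpp.two_le; omega
      exact Or.inl ⟨hpx, hpp, hpr, fun d hd hd1 ↦
        jacobsthal_bound hd1 ((oddRecipSum_mono hd hp0).trans_lt (not_le.mp hp))⟩
  have h4 := (Set.ncard_le_ncard h3 ((finite_setOf_le_and x _).union
    (finite_setOf_le_and x _))).trans (Set.ncard_union_le _ _)
  have h5 : ({p : ℕ | p ≤ x ∧ p.Prime ∧ IsRough y p}.ncard : ℝ) ≤ _ := Nat.cast_le.mpr h4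
  rw [Nat.cast_add] at h5
  have h6 := mul_le_mul_of_nonneg_left h1 hδ.le
  have h7 : (K * (k : ℝ) ^ (-(7 / 10) : ℝ) + δ / 2 * u) * (x / Real.log x) ≤
      (δ / 2 * u + δ / 2 * u) * (x / Real.log x) := by gcongr
  linarith
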